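/- arXiv:2003.09748 — 2 statements merged into one kernel-verified Lean document; each statement's English description precedes it below -/
import Mathlib

section
/- Suppose that m divides q^m − 1. Then for every integer k with 0 ≤ k ≤ m − 1, there exists a k-normal element of E over F. -/
open Polynomial UniqueFactorizationMonoid in
/-- Greedy subset-sum lemma. -/
theorem aux_subset_sum {A : Type} (w : A → ℕ) (n : ℕ) :
    ∀ S : Multiset A, Multiset.card S = n →
      (∀ e ∈ S, ∃ T ≤ S, (∀ t ∈ T, w t < w e) ∧ w e ≤ 1 + (T.map w).sum) →
      ∀ k ≤ (S.map w).sum, ∃ T ≤ S, (T.map w).sum = k := by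
  classical
  induction n with
  | zero =>
    intro S hS _ k hk
    rw [Multiset.card_eq_zero] at hS
    subst hS
    exact ⟨0, le_rfl, by simp at hk ⊢; omega⟩
  | succ n ih =>
    intro S hS hc k hk
    have hne : S.toFinset.Nonempty := by
      rw [Multiset.toFinset_nonempty]
      rintro rfl
      simp at hS
    obtain ⟨a, ha, hmax⟩ := S.toFinset.exists_max_image w hne
    rw [Multiset.mem_toFinset] at ha
    obtain ⟨S', rfl⟩ := Multiset.exists_cons_of_mem ha
    have hle : ∀ e ∈ a ::ₘ S', ∀ T ≤ a ::ₘ S', (∀ t ∈ T, w t < w e) → T ≤ S' := by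
      intro e he T hT h
      refine (Multiset.le_cons_of_notMem fun haT => ?_).1 hT
      have h1 := h a haT
      have h2 := hmax e (by simpa using he)
      omega
    have key := ih S' (by simpa using hS) (by
      intro e he
      obtain ⟨T, hT, h1, h2⟩ := hc e (Multiset.mem_cons_of_mem he)
      exact ⟨T, hle e (Multiset.mem_cons_of_mem he) T hT h1, h1, h2⟩)
    by_cases hk' : k ≤ (S'.map w).sum
    · obtain ⟨T, hT, h⟩ := key k hk'
      exact ⟨T, hT.trans (Multiset.le_cons_self _ _), h⟩
    · obtain ⟨T, hT, h1, h2⟩ := hc a ha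
      have hT' := hle a ha T hT h1
      have h3 : (T.map w).sum ≤ (S'.map w).sum := by
        obtain ⟨U, rfl⟩ := Multiset.le_iff_exists_add.1 hT'
        simp
      simp only [Multiset.map_cons, Multiset.sum_cons] at hk
      obtain ⟨T2, hT2, h⟩ := key (k - w a) (by omega)
      refine ⟨a ::ₘ T2, Multiset.cons_le_cons _ hT2, ?_⟩
      simp only [Multiset.map_cons, Multiset.sum_cons]
      omega

open Polynomial UniqueFactorizationMonoid in
theorem aux_sum_deg {F : Type} [Field F] [DecidableEq F] (f : F[X]) (hf : f ≠ 0) (T : Multiset F[X])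
    (hT : T ≤ normalizedFactors f) : T.prod.natDegree = (T.map natDegree).sum ∧ T.prod.Monic ∧
      T.prod ∣ f := by
  have hm : ∀ g ∈ T, g.Monic := fun g hg => by
    have h := (mem_normalizedFactors_iff' hf).1 (Multiset.mem_of_le hT hg)
    rw [← h.2.1]
    exact monic_normalize h.1.ne_zero
  refine ⟨natDegree_multiset_prod_of_monic _ hm, by simpa using monic_multiset_prod_of_monic T id (by simpa using hm), ?_⟩
  exact (Multiset.prod_dvd_prod_of_le hT).trans (prod_normalizedFactors hf).dvd

open Polynomial UniqueFactorizationMonoid in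
theorem aux_sum_deg_all {F : Type} [Field F] [DecidableEq F] (f : F[X]) (hf : f ≠ 0) :
    ((normalizedFactors f).map natDegree).sum = f.natDegree := by
  rw [← (aux_sum_deg f hf _ le_rfl).1]
  exact natDegree_eq_of_degree_eq (degree_eq_degree_of_associated (prod_normalizedFactors hf))

open Polynomial UniqueFactorizationMonoid in
theorem aux_divisor {F E : Type} [Field F] [Fintype F] [Field E] [Fintype E] [Algebra F E]
    (m : ℕ) (hm : Module.finrank F E = m)
    (hdvd : m ∣ Fintype.card F ^ m - 1) (k : ℕ) (hk : k ≤ m) :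
    ∃ g : F[X], g.Monic ∧ g ∣ X ^ m - 1 ∧ g.natDegree = k := by
  classical
  have hmpos : 0 < m := hm ▸ Module.finrank_pos
  have hne : ∀ n, 0 < n → (X ^ n - 1 : F[X]) ≠ 0 := fun n hn => (monic_X_pow_sub_C (1 : F) hn.ne').ne_zero
  have hdeg : ∀ n, (X ^ n - 1 : F[X]).natDegree = n := fun n => natDegree_X_pow_sub_C (r := (1 : F))
  obtain ⟨T, hT, h⟩ := aux_subset_sum natDegree _ (normalizedFactors (X ^ m - 1 : F[X])) rfl (by
    intro g hg
    have hg' := (mem_normalizedFactors_iff' (hne m hmpos)).1 hg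
    have hgpos : 0 < g.natDegree := hg'.1.natDegree_pos
    have hedvd : g.natDegree ∣ m := by
      rw [← hm]
      apply Polynomial.Irreducible.natDegree_dvd_finrank hg'.1
      have hcard : Fintype.card E = Fintype.card F ^ m := by
        rw [← hm]; exact Module.card_eq_pow_finrank
      have h1 : g ∣ X ^ (Fintype.card E) - X := by
        refine hg'.2.2.trans ?_
        obtain ⟨c, hc⟩ := hdvd
        have : Fintype.card E = m * c + 1 := by
          have := Fintype.card_pos (α := E)
          omega
        rw [this]
        have h2 : (X ^ m - 1 : F[X]) ∣ X ^ (m * c) - 1 := by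
          rw [pow_mul]; exact sub_one_dvd_pow_sub_one _ _
        have h3 : (X ^ (m * c + 1) - X : F[X]) = (X ^ (m * c) - 1) * X := by ring
        rw [h3]
        exact h2.mul_right _
      have h4 := Polynomial.map_dvd (algebraMap F E) h1
      simp only [Polynomial.map_sub, Polynomial.map_pow, map_X] at h4
      refine Splits.of_dvd ?_ ?_ h4
      · have := FiniteField.X_pow_card_sub_X_natDegree_eq E (Fintype.one_lt_card (α := E))
        rw [splits_iff_card_roots, this, FiniteField.roots_X_pow_card_sub_X]
        simp
      · exact FiniteField.X_pow_card_sub_X_ne_zero E (Fintype.one_lt_card (α := E))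
    by_cases he : g.natDegree = 1
    · exact ⟨0, Multiset.zero_le _, by simp, by simp [he]⟩
    refine ⟨normalizedFactors (X ^ g.natDegree - 1), ?_, ?_, ?_⟩
    · rw [← dvd_iff_normalizedFactors_le_normalizedFactors (hne _ hgpos) (hne _ hmpos)]
      obtain ⟨c, hc⟩ := hedvd
      rw [congrArg (fun n => (X ^ n - 1 : F[X])) hc]
      rw [pow_mul]; exact sub_one_dvd_pow_sub_one _ _
    · intro t ht
      have ht' := (mem_normalizedFactors_iff' (hne _ hgpos)).1 ht
      have hle := natDegree_le_of_dvd ht'.2.2 (hne _ hgpos)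
      rw [hdeg] at hle
      refine lt_of_le_of_ne hle fun heq => ?_
      have hx : (X ^ g.natDegree - 1 : F[X]).IsRoot 1 := by simp
      have hass : Associated t (X ^ g.natDegree - 1) :=
        associated_of_dvd_of_natDegree_le ht'.2.2 (hne _ hgpos) (by rw [hdeg, heq])
      have hr : t.IsRoot 1 := hx.dvd hass.symm.dvd
      have h5 : t.natDegree = 1 := natDegree_eq_of_degree_eq_some (degree_eq_one_of_irreducible_of_root ht'.1 hr)
      omega
    · rw [aux_sum_deg_all _ (hne _ hgpos), hdeg]; omega) k (by
    rw [aux_sum_deg_all _ (hne _ hmpos), hdeg]; exact hk)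
  obtain ⟨h1, h2, h3⟩ := aux_sum_deg _ (hne _ hmpos) T hT
  exact ⟨T.prod, h2, h3, h1.trans h⟩

open Polynomial in
/-- Let `E/F` be a degree-`m` extension of finite fields with `card F = q`.
If `m ∣ q^m − 1`, then for every `k` with `0 ≤ k ≤ m − 1` there exists a `k`-normal
element of `E` over `F`. -/
theorem exists_kNormal_of_dvd
    {F E : Type} [Field F] [Fintype F] [Field E] [Fintype E] [Algebra F E]
    (q m : ℕ) (hF : Fintype.card F = q) (hm : Module.finrank F E = m)
    (hdvd : m ∣ q ^ m - 1) :
    ∀ k : ℕ, k ≤ m - 1 →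
      ∃ α : E, Module.finrank F
          ↥(Submodule.span F (Set.range fun i : Fin m => α ^ q ^ (i : ℕ))) = m - k := by
  intro k hk
  have hmpos : 0 < m := hm ▸ Module.finrank_pos
  have hmon : (X ^ m - 1 : F[X]).Monic := monic_X_pow_sub_C (1 : F) hmpos.ne'
  have hdeg : (X ^ m - 1 : F[X]).natDegree = m := natDegree_X_pow_sub_C (r := (1 : F))
  obtain ⟨g, hg, ⟨h, hgh⟩, hgk⟩ := aux_divisor (E := E) m hm (hF ▸ hdvd) k (by omega)
  have hh0 : h ≠ 0 := by
    rintro rfl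
    exact hmon.ne_zero (by simpa using hgh)
  have hhdeg : h.natDegree = m - k := by
    have := natDegree_mul hg.ne_zero hh0
    rw [← hgh, hdeg] at this
    omega
  obtain ⟨β, hβ⟩ := exists_linearIndependent_algEquiv_apply F E
  let φ : Module.End F E := (FiniteField.frobeniusAlgHom F E).toLinearMap
  have hφ : ∀ (i : ℕ) (x : E), (φ ^ i) x = x ^ q ^ i := by
    intro i x
    induction i with
    | zero => simp
    | succ i ih =>
      rw [pow_succ', Module.End.mul_apply, ih]
      simp [φ, hF, pow_succ, pow_mul]
  have hφm : φ ^ m = 1 := by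
    ext x
    rw [hφ, Module.End.one_apply, ← hF, ← hm, ← Module.card_eq_pow_finrank (K := F) (V := E),
      FiniteField.pow_card]
  have hβ' : LinearIndependent F fun i : Fin m => (φ ^ (i : ℕ)) β := by
    subst hm
    have := hβ.comp _ (FiniteField.bijective_frobeniusAlgEquivOfAlgebraic_pow F E).1
    convert this using 2 with i
    rw [hφ]
    simp only [Function.comp, AlgEquiv.coe_pow,
      FiniteField.coe_frobeniusAlgEquivOfAlgebraic_iterate, hF]
  have hker : ∀ p : F[X], aeval φ p β = 0 ↔ X ^ m - 1 ∣ p := by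
    intro p
    constructor
    · intro hp
      rw [← modByMonic_eq_zero_iff_dvd hmon]
      set r := p %ₘ (X ^ m - 1) with hr
      have hrdeg : r.natDegree < m := by
        have := natDegree_modByMonic_lt p hmon (by
          intro h1
          rw [h1] at hdeg
          simp at hdeg
          omega)
        rwa [hdeg] at this
      have hr0 : aeval φ r β = 0 := by
        have h1 := modByMonic_add_div p (X ^ m - 1 : F[X])
        rw [← hr] at h1
        rw [← h1] at hp
        simpa [hφm] using hp
      rw [aeval_eq_sum_range' hrdeg, LinearMap.sum_apply, Finset.sum_range] at hr0
      have h2 := Fintype.linearIndependent_iff.1 hβ' (fun i => r.coeff i) (by simpa using hr0)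
      ext i
      by_cases hi : i < m
      · simpa using h2 ⟨i, hi⟩
      · simpa using coeff_eq_zero_of_natDegree_lt (by omega)
    · rintro ⟨c, rfl⟩
      simp [hφm]
  refine ⟨aeval φ g β, ?_⟩
  set α := aeval φ g β with hα
  let L : F[X] →ₗ[F] E := (LinearMap.applyₗ α).comp (aeval φ).toLinearMap
  have hL : ∀ p, L p = aeval φ p α := fun p => rfl
  have hrange : Submodule.span F (Set.range fun i : Fin m => α ^ q ^ (i : ℕ)) = LinearMap.range L := by
    apply le_antisymm
    · rw [Submodule.span_le]
      rintro _ ⟨i, rfl⟩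
      exact ⟨X ^ (i : ℕ), by rw [hL]; simp [hφ]⟩
    · rintro _ ⟨p, rfl⟩
      rw [hL, aeval_eq_sum_range, LinearMap.sum_apply]
      refine Submodule.sum_mem _ fun i _ => ?_
      rw [LinearMap.smul_apply]
      refine Submodule.smul_mem _ _ (Submodule.subset_span ⟨⟨i % m, Nat.mod_lt _ hmpos⟩, ?_⟩)
      simp only
      rw [← hφ]
      congr 1
      conv_rhs => rw [← Nat.mod_add_div i m, pow_add, pow_mul, hφm, one_pow, mul_one]
  have hkerL : LinearMap.ker L = (Ideal.span {h}).restrictScalars F := by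
    ext p
    rw [LinearMap.mem_ker, hL, hα, Submodule.restrictScalars_mem, Ideal.mem_span_singleton,
      ← Module.End.mul_apply, ← map_mul, hker, hgh, mul_comm p g]
    exact mul_dvd_mul_iff_left hg.ne_zero
  rw [hrange, ← hhdeg, ← finrank_quotient_span_eq_natDegree, ← L.quotKerEquivRange.finrank_eq, hkerL]
  rfl
end

section
/- Suppose that gcd(m, q − 1) = 1. Then there exists an element α ∈ E that is normal over F (i.e. 0-normal: its conjugates {α, α^q, ..., α^{q^{m−1}}} form an F-basis of E) and whose multiplicative order in the group Eˣ equals (q^m − 1)/(q − 1). -/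
/-- The averaged sum of a subgroup of characters. -/
noncomputable def avgChar {X Ω : Type*} [CommGroup X] [Fintype X] (ev : X → Ω → ℂ)
    (Y : Subgroup X) (x : Ω) : ℂ :=
  open Classical in ((Nat.card Y : ℂ))⁻¹ * ∑ χ : X, if χ ∈ Y then ev χ x else 0

lemma sum_ite_mem_card {X : Type*} [CommGroup X] [Fintype X] (Y : Subgroup X)
    [DecidablePred (· ∈ Y)] : (∑ χ : X, if χ ∈ Y then (1 : ℂ) else 0) = Nat.card Y := by
  rw [Finset.sum_boole, Nat.card_eq_fintype_card, Fintype.card_subtype]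

lemma avgChar_eq_one {X Ω : Type*} [CommGroup X] [Fintype X] (ev : X → Ω → ℂ)
    (Y : Subgroup X) (x : Ω) (h : ∀ χ ∈ Y, ev χ x = 1) : avgChar ev Y x = 1 := by
  classical
  unfold avgChar
  have : (∑ χ : X, if χ ∈ Y then ev χ x else 0) = ∑ χ : X, if χ ∈ Y then (1 : ℂ) else 0 := by
    refine Finset.sum_congr rfl fun χ _ => ?_
    split_ifs with hχ
    · exact h χ hχ
    · rfl
  have hc : (Nat.card Y : ℂ) ≠ 0 := by exact_mod_cast Nat.card_pos.ne'
  convert inv_mul_cancel₀ hc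
  rw [← sum_ite_mem_card Y]
  convert this

lemma avgChar_norm {X Ω : Type*} [CommGroup X] [Fintype X] (ev : X → Ω → ℂ)
    (hmul : ∀ χ η x, ev (χ * η) x = ev χ x * ev η x)
    (Y : Subgroup X) (x : Ω) : ‖1 - avgChar ev Y x‖ ≤ 1 := by
  classical
  by_cases h : ∀ χ ∈ Y, ev χ x = 1
  · rw [avgChar_eq_one ev Y x h]; simp
  · push Not at h
    obtain ⟨η, hη, hne⟩ := h
    have key : (∑ χ : X, if χ ∈ Y then ev χ x else 0) = 0 := by
      have h1 : ev η x * (∑ χ : X, if χ ∈ Y then ev χ x else 0)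
          = ∑ χ : X, if χ ∈ Y then ev χ x else 0 := by
        rw [Finset.mul_sum]
        refine Fintype.sum_equiv (Equiv.mulLeft η) _ _ fun χ => ?_
        simp only [Equiv.coe_mulLeft, Subgroup.mul_mem_cancel_left Y hη, hmul]
        split_ifs <;> simp
      by_contra h0
      exact hne (mul_right_cancel₀ h0 (by rw [h1, one_mul]))
    have : avgChar ev Y x = 0 := by
      unfold avgChar
      rw [mul_eq_zero]; right
      convert key
    rw [this]; simp

lemma sieve_coeff {X Ω ι : Type*} [CommGroup X] [Fintype X] (ev : X → Ω → ℂ)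
    (hmul : ∀ χ η x, ev (χ * η) x = ev χ x * ev η x) (hone : ∀ x, ev 1 x = 1)
    (Y : ι → Subgroup X) (S : Finset ι)
    (hind : ∀ T ⊆ S, ∀ i ∈ S, i ∉ T → ∀ χ ∈ Y i, χ ∈ (⨆ j ∈ T, Y j) → χ = 1) :
    ∃ c : X → ℂ, (∀ x, ∑ χ, c χ * ev χ x = ∏ i ∈ S, (1 - avgChar ev (Y i) x)) ∧
      c 1 = ((∏ i ∈ S, (1 - (Nat.card (Y i) : ℝ)⁻¹) : ℝ) : ℂ) ∧
      ∑ χ, ‖c χ‖ ≤ 2 ^ S.card * ∏ i ∈ S, (1 - (Nat.card (Y i) : ℝ)⁻¹) ∧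
      ∀ χ, c χ ≠ 0 → χ ∈ ⨆ j ∈ S, Y j := by
  classical
  induction S using Finset.induction_on with
  | empty =>
    refine ⟨fun χ => if χ = 1 then 1 else 0, fun x => ?_, by simp, ?_, fun χ h => ?_⟩
    · simp [hone]
    · simp [apply_ite]
    · have : χ = 1 := by
        by_contra h1; simp [h1] at h
      rw [this]; exact Subgroup.one_mem _
  | insert i S hi ih =>
    obtain ⟨c, hc, hc1, hcn, hcs⟩ := ih (fun T hT j hj => hind T (hT.trans (Finset.subset_insert _ _)) j
      (Finset.mem_insert_of_mem hj))
    set n : ℝ := (Nat.card (Y i) : ℝ) with hn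
    have hnpos : 0 < n := by rw [hn]; exact_mod_cast Nat.card_pos
    have hn1 : 1 ≤ n := by rw [hn]; exact_mod_cast Nat.card_pos
    have hninv : n⁻¹ ≤ 1 := inv_le_one_of_one_le₀ hn1
    -- kernel
    set k : X → ℂ := fun η => (if η = 1 then 1 else 0) - (if η ∈ Y i then (n⁻¹ : ℂ) else 0) with hk
    have hksum : ∑ η, ‖k η‖ = 2 * (1 - n⁻¹) := by
      have : ∀ η, ‖k η‖ = (if η ∈ Y i then n⁻¹ else 0) + (if η = 1 then 1 - 2 * n⁻¹ else 0) := by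
        intro η
        by_cases h1 : η = 1
        · subst h1
          have : k 1 = ((1 - n⁻¹ : ℝ) : ℂ) := by simp [hk, (Y i).one_mem]
          rw [this, Complex.norm_real, Real.norm_of_nonneg (by linarith)]
          simp [(Y i).one_mem]; ring
        · by_cases h2 : η ∈ Y i
          · simp only [hk, h1, h2, if_true, if_false, zero_sub, norm_neg, norm_inv, add_zero]
            rw [Complex.norm_real, Real.norm_of_nonneg hnpos.le]
          · simp [hk, h1, h2]
      simp only [this, Finset.sum_add_distrib]
      have h2 : (∑ η : X, if η ∈ Y i then n⁻¹ else 0) = 1 := by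
        rw [← Finset.sum_filter, Finset.sum_const, nsmul_eq_mul, ← Fintype.card_subtype,
          ← Nat.card_eq_fintype_card]
        exact mul_inv_cancel₀ hnpos.ne'
      rw [h2]; simp; ring
    have hkev : ∀ x, ∑ η, k η * ev η x = 1 - avgChar ev (Y i) x := by
      intro x
      simp only [hk, sub_mul, Finset.sum_sub_distrib, ite_mul, one_mul, zero_mul]
      congr 1
      · simp [hone]
      · unfold avgChar
        rw [Finset.mul_sum]
        refine Finset.sum_congr rfl fun χ _ => ?_
        simp [hn]
    refine ⟨fun χ => ∑ η, k η * c (η⁻¹ * χ), fun x => ?_, ?_, ?_, ?_⟩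
    · rw [Finset.prod_insert hi, ← hc, ← hkev, Finset.sum_mul_sum]
      simp only [Finset.sum_mul]
      rw [Finset.sum_comm]
      refine Finset.sum_congr rfl fun η _ => ?_
      refine Fintype.sum_equiv (Equiv.mulLeft η⁻¹) _ _ fun χ => ?_
      simp only [Equiv.coe_mulLeft]
      have : ev χ x = ev η x * ev (η⁻¹ * χ) x := by rw [← hmul]; simp
      rw [this]; ring
    · beta_reduce
      rw [Finset.prod_insert hi, Complex.ofReal_mul, ← hc1]
      rw [Finset.sum_eq_single 1]
      · simp [hk, (Y i).one_mem, hn]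
      · intro η _ hη
        simp only [hk, hη, if_false, zero_sub, mul_one]
        by_cases h2 : η ∈ Y i
        · have : c η⁻¹ = 0 := by
            by_contra h0
            have := hind S (Finset.subset_insert _ _) i (Finset.mem_insert_self _ _) hi η h2
              (by simpa using Subgroup.inv_mem _ (hcs _ h0))
            exact hη this
          rw [this, mul_zero]
        · simp [h2]
      · simp
    · rw [Finset.prod_insert hi, Finset.card_insert_of_notMem hi]
      calc ∑ χ, ‖∑ η, k η * c (η⁻¹ * χ)‖ ≤ ∑ χ, ∑ η, ‖k η‖ * ‖c (η⁻¹ * χ)‖ := by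
            refine Finset.sum_le_sum fun χ _ => (norm_sum_le _ _).trans (le_of_eq ?_)
            simp
        _ = (∑ η, ‖k η‖) * ∑ χ, ‖c χ‖ := by
            rw [Finset.sum_comm, Finset.sum_mul]
            refine Finset.sum_congr rfl fun η _ => ?_
            rw [← Finset.mul_sum]
            congr 1
            exact Fintype.sum_equiv (Equiv.mulLeft η⁻¹) _ _ fun χ => rfl
        _ ≤ (2 * (1 - n⁻¹)) * (2 ^ S.card * ∏ i ∈ S, (1 - (Nat.card (Y i) : ℝ)⁻¹)) := by
            rw [hksum]
            exact mul_le_mul_of_nonneg_left hcn (by linarith)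
        _ = _ := by ring
    · intro χ hχ
      obtain ⟨η, _, hη⟩ := Finset.exists_ne_zero_of_sum_ne_zero hχ
      have h1 : c (η⁻¹ * χ) ≠ 0 := right_ne_zero_of_mul hη
      have h2 : k η ≠ 0 := left_ne_zero_of_mul hη
      have h3 : η ∈ Y i := by
        by_contra h
        have : η ≠ 1 := fun h' => h (h' ▸ (Y i).one_mem)
        simp [hk, h, this] at h2
      have h4 := hcs _ h1
      have : χ = η * (η⁻¹ * χ) := by group
      rw [this, Finset.iSup_insert]
      exact Subgroup.mul_mem_sup h3 h4


lemma norm_gaussSum_eq {E : Type*} [Field E] [Fintype E] (χ : MulChar E ℂ) (hχ : χ ≠ 1)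
    (ψ : AddChar E ℂ) (hψ : ψ ≠ 1) : ‖gaussSum χ ψ‖ = √(Fintype.card E : ℝ) := by
  have h := gaussSum_mul_gaussSum_eq_card hχ (AddChar.IsPrimitive.of_ne_one hψ)
  rw [← star_gaussSum_eq] at h
  have h2 := congrArg norm h
  rw [norm_mul, norm_star, Complex.norm_natCast] at h2
  rw [← h2, Real.sqrt_mul_self (norm_nonneg _)]

theorem main_sieve {E : Type*} [Field E] [Fintype E] {ι κ : Type*}
    (S : Finset ι) (Y : ι → Subgroup (MulChar E ℂ))
    (hindY : ∀ S' ⊆ S, ∀ i ∈ S, i ∉ S' → ∀ χ ∈ Y i, χ ∈ (⨆ j ∈ S', Y j) → χ = 1)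
    (T : Finset κ) (Z : κ → Subgroup (AddChar E ℂ))
    (hindZ : ∀ S' ⊆ T, ∀ i ∈ T, i ∉ S' → ∀ χ ∈ Z i, χ ∈ (⨆ j ∈ S', Z j) → χ = 1)
    (hcY : ∀ i ∈ S, 2 ≤ Nat.card (Y i)) (hcZ : ∀ i ∈ T, 2 ≤ Nat.card (Z i))
    (hT : T.Nonempty) (B : Finset E)
    (h : (B.card : ℝ) < (∏ i ∈ S, (1 - (Nat.card (Y i) : ℝ)⁻¹)) * (1 / 2) ^ T.card *
      ((Fintype.card E : ℝ) - (2 ^ S.card - 1) * (2 ^ T.card - 1) * √(Fintype.card E : ℝ))) :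
    ∃ x : E, x ≠ 0 ∧ x ∉ B ∧ (∀ i ∈ S, ¬ ∀ χ ∈ Y i, χ x = 1) ∧
      (∀ j ∈ T, ¬ ∀ ψ ∈ Z j, ψ x = 1) := by
  classical
  have : Fintype (MulChar E ℂ) := Fintype.ofFinite _
  have : Fintype (AddChar E ℂ) := Fintype.ofFinite _
  by_contra hcon
  push Not at hcon
  obtain ⟨c, hc, hc1, hcn, -⟩ := sieve_coeff (fun (χ : MulChar E ℂ) (u : Eˣ) => χ (u : E))
    (fun χ η x => by simp) (fun x => by simp) Y S hindY
  obtain ⟨b, hb, hb1, hbn, -⟩ := sieve_coeff (fun (χ : AddChar E ℂ) (u : E) => χ u)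
    (fun χ η x => by simp) (fun x => by simp) Z T hindZ
  set C : ℝ := ∏ i ∈ S, (1 - (Nat.card (Y i) : ℝ)⁻¹) with hC
  set D : ℝ := ∏ i ∈ T, (1 - (Nat.card (Z i) : ℝ)⁻¹) with hD
  have hCpos : 0 ≤ C := Finset.prod_nonneg fun i hi => by
    have : (1 : ℝ) ≤ Nat.card (Y i) := by exact_mod_cast (by have := hcY i hi; omega)
    have := inv_le_one_of_one_le₀ this
    linarith
  have hDge : (1 / 2 : ℝ) ^ T.card ≤ D := by
    rw [hD, ← Finset.prod_const]
    refine Finset.prod_le_prod (fun _ _ => by norm_num) fun i hi => ?_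
    have : (2 : ℝ) ≤ Nat.card (Z i) := by exact_mod_cast hcZ i hi
    have := inv_anti₀ (by norm_num) this
    linarith
  have hDpos : 0 < D := lt_of_lt_of_le (by positivity) hDge
  set N : ℝ := (Fintype.card E : ℝ) with hN
  set f : Eˣ → ℂ := fun u => ∏ i ∈ S, (1 - avgChar (fun (χ : MulChar E ℂ) (u : Eˣ) => χ (u : E)) (Y i) u)
  set g : E → ℂ := fun x => ∏ i ∈ T, (1 - avgChar (fun (χ : AddChar E ℂ) (u : E) => χ u) (Z i) x)
  have hg0 : g 0 = 0 := by
    obtain ⟨j, hj⟩ := hT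
    refine Finset.prod_eq_zero hj ?_
    rw [avgChar_eq_one _ _ _ (fun χ _ => by simp)]; simp
  have hfn : ∀ u, ‖f u‖ ≤ 1 := fun u => by
    rw [norm_prod]
    exact Finset.prod_le_one (fun _ _ => norm_nonneg _)
      fun i _ => avgChar_norm _ (fun χ η x => by simp) _ _
  have hgn : ∀ u, ‖g u‖ ≤ 1 := fun u => by
    rw [norm_prod]
    exact Finset.prod_le_one (fun _ _ => norm_nonneg _)
      fun i _ => avgChar_norm _ (fun χ η x => by simp) _ _
  have hzero : ∀ u : Eˣ, (u : E) ∉ B → f u * g u = 0 := by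
    intro u hu
    by_cases hall : ∀ i ∈ S, ¬ ∀ χ ∈ Y i, χ (u : E) = 1
    · obtain ⟨j, hj, hjj⟩ := hcon u u.ne_zero hu (by
        intro i hi; have := hall i hi; push Not at this; exact this)
      have : g u = 0 := Finset.prod_eq_zero hj (by
        rw [avgChar_eq_one _ _ _ hjj]; simp)
      rw [this, mul_zero]
    · push Not at hall
      obtain ⟨i, hi, hii⟩ := hall
      have : f u = 0 := Finset.prod_eq_zero hi (by
        rw [avgChar_eq_one (fun (χ : MulChar E ℂ) (u : Eˣ) => χ (u : E)) (Y i) u hii]; simp)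
      rw [this, zero_mul]
  have hup : ‖∑ u : Eˣ, f u * g u‖ ≤ B.card := by
    calc ‖∑ u : Eˣ, f u * g u‖ ≤ ∑ u : Eˣ, ‖f u * g u‖ := norm_sum_le _ _
      _ ≤ ∑ u : Eˣ, if (u : E) ∈ B then (1 : ℝ) else 0 := by
          refine Finset.sum_le_sum fun u _ => ?_
          split_ifs with hu
          · rw [norm_mul]; exact mul_le_one₀ (hfn u) (norm_nonneg _) (hgn u)
          · rw [hzero u hu, norm_zero]
      _ ≤ B.card := by
          rw [Finset.sum_boole]
          norm_cast
          exact Finset.card_le_card_of_injOn (fun u : Eˣ => (u : E)) (fun u hu => by simpa using hu)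
            (fun u _ v _ huv => Units.ext huv)
  have hgauss : ∀ (χ : MulChar E ℂ) (ψ : AddChar E ℂ), ∑ u : Eˣ, χ (u : E) * ψ (u : E) = gaussSum χ ψ := by
    intro χ ψ
    unfold gaussSum
    rw [← Finset.sum_subset (Finset.subset_univ (Finset.univ.image (fun u : Eˣ => (u : E))))]
    · rw [Finset.sum_image (fun u _ v _ huv => Units.ext huv)]
    · intro x _ hx
      have : ¬ IsUnit x := fun ⟨u, hu⟩ => hx (Finset.mem_image.mpr ⟨u, Finset.mem_univ _, hu⟩)
      rw [MulChar.map_nonunit _ this, zero_mul]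
  have hexp : ∑ u : Eˣ, f u * g u = ∑ χ, c χ * ∑ ψ, b ψ * gaussSum χ ψ := by
    have : ∀ u : Eˣ, f u * g u = ∑ χ, ∑ ψ, c χ * (b ψ * (χ (u : E) * ψ (u : E))) := by
      intro u
      rw [show f u = _ from (hc u).symm, show g u = _ from (hb u).symm, Finset.sum_mul_sum]
      refine Finset.sum_congr rfl fun _ _ => Finset.sum_congr rfl fun _ _ => by ring
    simp only [this]
    rw [Finset.sum_comm]
    refine Finset.sum_congr rfl fun χ _ => ?_
    rw [Finset.sum_comm, Finset.mul_sum]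
    refine Finset.sum_congr rfl fun ψ _ => ?_
    rw [← hgauss, Finset.mul_sum, Finset.mul_sum]
  have hbsum : ∑ ψ, b ψ = 0 := by
    have := hb 0
    simpa [hg0] using this.trans hg0
  have hmain : ∑ ψ, b ψ * gaussSum (1 : MulChar E ℂ) ψ = (D * N : ℝ) := by
    have : ∀ ψ : AddChar E ℂ, b ψ * gaussSum (1 : MulChar E ℂ) ψ = (if ψ = 1 then b ψ * N else 0) - b ψ := by
      intro ψ
      split_ifs with h1
      · subst h1
        rw [gaussSum_one_one, Nat.card_units, Nat.card_eq_fintype_card,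
          Nat.cast_sub Fintype.card_pos, hN]
        push_cast; ring
      · rw [gaussSum_one_left h1]; ring
    simp only [this, Finset.sum_sub_distrib, hbsum]
    simp [hb1]
  have hsplitc : ∑ χ ∈ Finset.univ.erase 1, ‖c χ‖ ≤ (2 ^ S.card - 1) * C := by
    have := Finset.add_sum_erase Finset.univ (fun χ => ‖c χ‖) (Finset.mem_univ 1)
    rw [hc1, Complex.norm_real, Real.norm_of_nonneg hCpos] at this
    linarith
  have hsplitb : ∑ χ ∈ Finset.univ.erase 1, ‖b χ‖ ≤ (2 ^ T.card - 1) * D := by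
    have := Finset.add_sum_erase Finset.univ (fun χ => ‖b χ‖) (Finset.mem_univ 1)
    rw [hb1, Complex.norm_real, Real.norm_of_nonneg hDpos.le] at this
    linarith
  have hrest : ∀ χ : MulChar E ℂ, χ ≠ 1 →
      ‖∑ ψ, b ψ * gaussSum χ ψ‖ ≤ (2 ^ T.card - 1) * D * √N := by
    intro χ hχ
    rw [← Finset.add_sum_erase Finset.univ _ (Finset.mem_univ 1), gaussSum_one_right hχ, mul_zero,
      zero_add]
    calc _ ≤ ∑ ψ ∈ Finset.univ.erase 1, ‖b ψ * gaussSum χ ψ‖ := norm_sum_le _ _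
      _ = (∑ ψ ∈ Finset.univ.erase 1, ‖b ψ‖) * √N := by
          rw [Finset.sum_mul]
          refine Finset.sum_congr rfl fun ψ hψ => ?_
          rw [norm_mul, norm_gaussSum_eq χ hχ ψ (Finset.ne_of_mem_erase hψ)]
      _ ≤ _ := mul_le_mul_of_nonneg_right hsplitb (Real.sqrt_nonneg _)
  have hlow : C * D * N - (2 ^ S.card - 1) * C * ((2 ^ T.card - 1) * D * √N) ≤ ‖∑ u : Eˣ, f u * g u‖ := by
    rw [hexp, ← Finset.add_sum_erase Finset.univ _ (Finset.mem_univ 1), hmain, hc1]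
    have h1 : ‖∑ χ ∈ Finset.univ.erase 1, c χ * ∑ ψ, b ψ * gaussSum χ ψ‖
        ≤ (2 ^ S.card - 1) * C * ((2 ^ T.card - 1) * D * √N) := by
      calc _ ≤ ∑ χ ∈ Finset.univ.erase 1, ‖c χ * ∑ ψ, b ψ * gaussSum χ ψ‖ := norm_sum_le _ _
        _ ≤ ∑ χ ∈ Finset.univ.erase 1, ‖c χ‖ * ((2 ^ T.card - 1) * D * √N) := by
            refine Finset.sum_le_sum fun χ hχ => ?_
            rw [norm_mul]
            exact mul_le_mul_of_nonneg_left (hrest χ (Finset.ne_of_mem_erase hχ)) (norm_nonneg _)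
        _ ≤ _ := by
            rw [← Finset.sum_mul]
            refine mul_le_mul_of_nonneg_right hsplitc ?_
            have : (1 : ℝ) ≤ 2 ^ T.card := one_le_pow₀ (by norm_num)
            have : (0 : ℝ) ≤ 2 ^ T.card - 1 := by linarith
            positivity
    have h2 : ‖((C : ℝ) : ℂ) * ((D * N : ℝ) : ℂ)‖ = C * D * N := by
      rw [← Complex.ofReal_mul, Complex.norm_real, Real.norm_of_nonneg (by positivity)]; ring
    have h3 := norm_sub_le_norm_add (((C : ℝ) : ℂ) * ((D * N : ℝ) : ℂ))
      (∑ χ ∈ Finset.univ.erase 1, c χ * ∑ ψ, b ψ * gaussSum χ ψ)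
    rw [h2] at h3
    linarith
  have hpos : 0 < N - (2 ^ S.card - 1) * (2 ^ T.card - 1) * √N := by
    by_contra hneg
    push Not at hneg
    have : C * (1 / 2) ^ T.card * (N - (2 ^ S.card - 1) * (2 ^ T.card - 1) * √N) ≤ 0 :=
      mul_nonpos_of_nonneg_of_nonpos (by positivity) hneg
    have : (0 : ℝ) ≤ B.card := by positivity
    linarith
  have : C * (1 / 2) ^ T.card * (N - (2 ^ S.card - 1) * (2 ^ T.card - 1) * √N) ≤
      C * D * (N - (2 ^ S.card - 1) * (2 ^ T.card - 1) * √N) :=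
    mul_le_mul_of_nonneg_right (mul_le_mul_of_nonneg_left hDge hCpos) hpos.le
  have e1 : C * D * (N - (2 ^ S.card - 1) * (2 ^ T.card - 1) * √N) =
    C * D * N - (2 ^ S.card - 1) * C * ((2 ^ T.card - 1) * D * √N) := by ring
  linarith


open Polynomial in
/-- The `F`-linear `q`-power Frobenius map on `E`. -/
noncomputable def frobLin (F E : Type*) [Field F] [Fintype F] [Field E] [Algebra F E] :
    E →ₗ[F] E := (FiniteField.frobeniusAlgHom F E).toLinearMap

lemma frobLin_apply (F E : Type*) [Field F] [Fintype F] [Field E] [Algebra F E] (x : E) :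
    frobLin F E x = x ^ Fintype.card F := rfl

/-- Multiplicative characters killed by `n`. -/
noncomputable def torsChar (E : Type*) [Field E] (n : ℕ) : Subgroup (MulChar E ℂ) := (powMonoidHom n).ker

lemma mem_torsChar (E : Type*) [Field E] (n : ℕ) (χ : MulChar E ℂ) : χ ∈ torsChar E n ↔ χ ^ n = 1 :=
  Iff.rfl

open Polynomial

/-- Additive characters trivial on the image of `P(σ)`. -/
noncomputable def annChar {F E : Type*} [Field F] [Fintype F] [Field E] [Algebra F E] (P : F[X]) :
    Subgroup (AddChar E ℂ) where
  carrier := {ψ | ∀ x, ψ (aeval (frobLin F E) P x) = 1}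
  one_mem' := fun x => by simp
  mul_mem' := fun {a b} ha hb x => by simp [ha x, hb x]
  inv_mem' := fun {a} ha x => by
    rw [AddChar.inv_apply, AddChar.map_neg_eq_inv, ha x, inv_one]

lemma le_card_torsChar (E : Type*) [Field E] [Fintype E] (l : ℕ) (hl : l.Prime)
    (hd : l ∣ Fintype.card E - 1) : l ≤ Nat.card (torsChar E l) := by
  classical
  have : Fact l.Prime := ⟨hl⟩
  have hc : Nat.card (MulChar E ℂ) = Nat.card Eˣ :=
    MulChar.card_eq_card_units_of_hasEnoughRootsOfUnity E ℂ
  have hd' : l ∣ Nat.card (MulChar E ℂ) := by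
    rw [hc, Nat.card_units, Nat.card_eq_fintype_card]; exact hd
  obtain ⟨χ, hχ⟩ := exists_prime_orderOf_dvd_card' l hd'
  calc l = Nat.card (Subgroup.zpowers χ) := by rw [Nat.card_zpowers, hχ]
    _ ≤ Nat.card (torsChar E l) := by
      refine Nat.card_le_card_of_injective _ (Subgroup.inclusion_injective
        (H := Subgroup.zpowers χ) (K := torsChar E l) ?_)
      rw [Subgroup.zpowers_le, mem_torsChar, ← hχ, pow_orderOf_eq_one]

lemma torsChar_indep (E : Type*) [Field E] [Fintype E] (S : Finset ℕ) (hS : ∀ l ∈ S, l.Prime) :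
    ∀ S' ⊆ S, ∀ i ∈ S, i ∉ S' → ∀ χ ∈ torsChar E i, χ ∈ (⨆ j ∈ S', torsChar E j) → χ = 1 := by
  intro S' hS' i hi hiS χ hχ hχ'
  have hle : (⨆ j ∈ S', torsChar E j) ≤ torsChar E (∏ j ∈ S', j) := by
    refine iSup₂_le fun j hj η hη => ?_
    rw [mem_torsChar] at hη ⊢
    rw [← Finset.mul_prod_erase S' (fun j => j) hj, pow_mul, hη, one_pow]
  have h1 := hle hχ'
  rw [mem_torsChar] at h1 hχ
  have hco : Nat.Coprime i (∏ j ∈ S', j) := Nat.Coprime.prod_right fun j hj =>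
    (Nat.coprime_primes (hS i hi) (hS j (hS' hj))).mpr (fun h => hiS (h ▸ hj))
  rw [← orderOf_eq_one_iff, ← Nat.dvd_one, ← hco.gcd_eq_one]
  exact Nat.dvd_gcd (orderOf_dvd_of_pow_eq_one hχ) (orderOf_dvd_of_pow_eq_one h1)

lemma two_le_card_annChar {F E : Type*} [Field F] [Fintype F] [Field E] [Fintype E] [Algebra F E]
    (P : F[X]) (hP : ¬ Function.Surjective (aeval (frobLin F E) P)) :
    2 ≤ Nat.card (annChar P : Subgroup (AddChar E ℂ)) := by
  classical
  let R : AddSubgroup E := (LinearMap.range (aeval (frobLin F E) P)).toAddSubgroup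
  obtain ⟨x, hx⟩ := not_forall.mp hP
  have hxR : (QuotientAddGroup.mk' R x) ≠ 0 := by
    intro h
    rw [QuotientAddGroup.mk'_apply, QuotientAddGroup.eq_zero_iff] at h
    exact hx h
  obtain ⟨ψ, hψ⟩ := AddChar.exists_apply_ne_zero.mpr hxR
  have hmem : ψ.compAddMonoidHom (QuotientAddGroup.mk' R) ∈ (annChar P : Subgroup (AddChar E ℂ)) := by
    intro y
    have : QuotientAddGroup.mk' R (aeval (frobLin F E) P y) = 0 := by
      rw [QuotientAddGroup.mk'_apply, QuotientAddGroup.eq_zero_iff]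
      exact ⟨y, rfl⟩
    rw [AddChar.compAddMonoidHom_apply, this, AddChar.map_zero_eq_one]
  have : Nontrivial (annChar P : Subgroup (AddChar E ℂ)) := by
    refine ⟨⟨⟨_, hmem⟩, 1, fun h => hψ ?_⟩⟩
    have := congrArg (fun z : (annChar P : Subgroup (AddChar E ℂ)) => (z : AddChar E ℂ) x) h
    simpa using this
  exact Finite.one_lt_card

lemma annChar_indep {F E : Type*} [Field F] [Fintype F] [Field E] [Fintype E] [Algebra F E]
    (T : Finset F[X]) (hT : ∀ P ∈ T, Irreducible P ∧ P.Monic) :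
    ∀ S' ⊆ T, ∀ i ∈ T, i ∉ S' → ∀ χ ∈ (annChar i : Subgroup (AddChar E ℂ)),
      χ ∈ (⨆ j ∈ S', (annChar j : Subgroup (AddChar E ℂ))) → χ = 1 := by
  classical
  intro S' hS' i hi hiS χ hχ hχ'
  have hle : (⨆ j ∈ S', (annChar j : Subgroup (AddChar E ℂ))) ≤ annChar (∏ j ∈ S', j) := by
    refine iSup₂_le fun j hj η hη x => ?_
    rw [← Finset.mul_prod_erase S' (fun j => j) hj, map_mul, Module.End.mul_apply]
    exact hη _
  have h1 := hle hχ'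
  have hco : IsCoprime i (∏ j ∈ S', j) := IsCoprime.prod_right fun j hj => by
    rw [(hT i hi).1.coprime_iff_not_dvd]
    intro hd
    have := (hT i hi).1.associated_of_dvd (hT j (hS' hj)).1 hd
    exact hiS ((eq_of_monic_of_associated (hT i hi).2 (hT j (hS' hj)).2 this) ▸ hj)
  obtain ⟨u, v, huv⟩ := hco
  ext x
  have hx : x = aeval (frobLin F E) i (aeval (frobLin F E) u x) +
      aeval (frobLin F E) (∏ j ∈ S', j) (aeval (frobLin F E) v x) := by
    rw [← Module.End.mul_apply, ← Module.End.mul_apply, ← map_mul, ← map_mul,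
      ← LinearMap.add_apply, ← map_add, mul_comm i, mul_comm _ v, huv]
    simp
  rw [hx, AddChar.map_add_eq_mul, hχ, h1]
  simp

theorem sieve2 {F E : Type*} [Field F] [Fintype F] [Field E] [Fintype E] [Algebra F E]
    (S : Finset ℕ) (hS : ∀ l ∈ S, l.Prime ∧ l ∣ Fintype.card E - 1)
    (T : Finset F[X]) (hT : T.Nonempty) (hTi : ∀ P ∈ T, Irreducible P ∧ P.Monic)
    (hTs : ∀ P ∈ T, ¬ Function.Surjective (aeval (frobLin F E) P)) (B : Finset E)
    (h : (B.card : ℝ) < (∏ l ∈ S, (1 - (l : ℝ)⁻¹)) * (1 / 2) ^ T.card *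
      ((Fintype.card E : ℝ) - (2 ^ S.card - 1) * (2 ^ T.card - 1) * √(Fintype.card E : ℝ))) :
    ∃ x : E, x ≠ 0 ∧ x ∉ B ∧ (∀ l ∈ S, ∀ y, y ^ l ≠ x) ∧
      (∀ P ∈ T, ∀ y, aeval (frobLin F E) P y ≠ x) := by
  have hcard : ∀ l ∈ S, l ≤ Nat.card (torsChar E l) := fun l hl =>
    le_card_torsChar E l (hS l hl).1 (hS l hl).2
  have hnn : 0 ≤ ∏ l ∈ S, (1 - (l : ℝ)⁻¹) := Finset.prod_nonneg fun l hl => by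
    have : (1 : ℝ) ≤ l := by exact_mod_cast (hS l hl).1.one_le
    have := inv_le_one_of_one_le₀ this
    linarith
  have hpos : 0 < (Fintype.card E : ℝ) - (2 ^ S.card - 1) * (2 ^ T.card - 1) * √(Fintype.card E : ℝ) := by
    by_contra hneg
    push Not at hneg
    have h1 : (∏ l ∈ S, (1 - (l : ℝ)⁻¹)) * (1 / 2) ^ T.card *
      ((Fintype.card E : ℝ) - (2 ^ S.card - 1) * (2 ^ T.card - 1) * √(Fintype.card E : ℝ)) ≤ 0 :=
      mul_nonpos_of_nonneg_of_nonpos (by positivity) hneg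
    have h2 : (0 : ℝ) ≤ B.card := by positivity
    linarith
  obtain ⟨x, hx0, hxB, hxS, hxT⟩ := main_sieve S (torsChar E)
    (torsChar_indep E S fun l hl => (hS l hl).1) T (fun P => annChar P) (annChar_indep T hTi)
    (fun l hl => (hS l hl).1.two_le.trans (hcard l hl))
    (fun P hP => two_le_card_annChar P (hTs P hP)) hT B (lt_of_lt_of_le h (by
      refine mul_le_mul_of_nonneg_right (mul_le_mul_of_nonneg_right ?_ (by positivity)) hpos.le
      refine Finset.prod_le_prod (fun l hl => ?_) fun l hl => ?_
      · have : (1 : ℝ) ≤ l := by exact_mod_cast (hS l hl).1.one_le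
        have := inv_le_one_of_one_le₀ this
        linarith
      · have h0 : (0 : ℝ) < l := by exact_mod_cast (hS l hl).1.pos
        have h1 : (l : ℝ) ≤ Nat.card (torsChar E l) := by exact_mod_cast hcard l hl
        have := inv_anti₀ h0 h1
        linarith))
  refine ⟨x, hx0, hxB, fun l hl y hy => hxS l hl fun χ hχ => ?_, fun P hP y hy => hxT P hP fun ψ hψ => ?_⟩
  · have hy0 : y ≠ 0 := by
      rintro rfl
      rw [zero_pow (hS l hl).1.ne_zero] at hy
      exact hx0 hy.symm
    rw [mem_torsChar] at hχ
    rw [← hy, map_pow, ← MulChar.pow_apply' _ (hS l hl).1.ne_zero, hχ, MulChar.one_apply]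
    exact hy0.isUnit
  · rw [← hy]; exact hψ y


open Polynomial

lemma aux_sqrt_bound (a b w v N : ℕ) (hw : a ≤ w) (hv : b ≤ v)
    (h : (2 ^ w - 1) ^ 2 * (2 ^ v - 1) ^ 2 < N) :
    (0 : ℝ) < (N : ℝ) - (2 ^ a - 1) * (2 ^ b - 1) * √(N : ℝ) := by
  have ha : 2 ^ a - 1 ≤ 2 ^ w - 1 := Nat.sub_le_sub_right (Nat.pow_le_pow_right (by norm_num) hw) 1
  have hb : 2 ^ b - 1 ≤ 2 ^ v - 1 := Nat.sub_le_sub_right (Nat.pow_le_pow_right (by norm_num) hv) 1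
  have h' : ((2 ^ a - 1) * (2 ^ b - 1)) ^ 2 < N := by
    rw [mul_pow]
    exact lt_of_le_of_lt (Nat.mul_le_mul (Nat.pow_le_pow_left ha 2) (Nat.pow_le_pow_left hb 2)) h
  have e1 : ((2 ^ a - 1 : ℕ) : ℝ) = 2 ^ a - 1 := by
    rw [Nat.cast_sub Nat.one_le_two_pow]; simp
  have e2 : ((2 ^ b - 1 : ℕ) : ℝ) = 2 ^ b - 1 := by
    rw [Nat.cast_sub Nat.one_le_two_pow]; simp
  have h2 : (((2 ^ a - 1) * (2 ^ b - 1) : ℕ) : ℝ) < √(N : ℝ) := by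
    refine Real.lt_sqrt_of_sq_lt ?_
    exact_mod_cast h'
  have h3 : (0 : ℝ) < √(N : ℝ) := lt_of_le_of_lt (by positivity) h2
  have h4 : √(N : ℝ) * √(N : ℝ) = N := Real.mul_self_sqrt (by positivity)
  rw [Nat.cast_mul, e1, e2] at h2
  nlinarith

set_option linter.unusedSectionVars false

section part4
variable {F E : Type*} [Field F] [Fintype F] [Field E] [Fintype E] [Algebra F E]

lemma frobLin_pow_apply (i : ℕ) (x : E) : (frobLin F E ^ i) x = x ^ Fintype.card F ^ i := by
  induction i generalizing x with
  | zero => simp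
  | succ n ih => rw [pow_succ, Module.End.mul_apply, ih, frobLin_apply, ← pow_mul, ← pow_succ']

lemma minpoly_frobLin : minpoly F (frobLin F E) = X ^ Module.finrank F E - 1 :=
  FiniteField.minpoly_frobeniusAlgHom F E

lemma aeval_frobLin_X_pow_sub_one :
    aeval (frobLin F E) (X ^ Module.finrank F E - 1 : F[X]) = 0 := by
  rw [← minpoly_frobLin]; exact minpoly.aeval _ _

lemma X_pow_finrank_ne_zero : (X ^ Module.finrank F E - 1 : F[X]) ≠ 0 :=
  (monic_X_pow_sub_C (1 : F) (Module.finrank_pos (R := F) (M := E)).ne').ne_zero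

lemma not_surj_of_dvd (P : F[X]) (hP : P ∣ X ^ Module.finrank F E - 1) (hu : ¬ IsUnit P) :
    ¬ Function.Surjective (aeval (frobLin F E) P) := by
  intro hs
  obtain ⟨R, hR⟩ := hP
  have h0 : aeval (frobLin F E) R = 0 := by
    ext y
    obtain ⟨z, rfl⟩ := hs y
    rw [← Module.End.mul_apply, ← map_mul, mul_comm R P, ← hR, aeval_frobLin_X_pow_sub_one]
    simp
  have hd := minpoly.dvd F (frobLin F E) h0
  rw [minpoly_frobLin, hR] at hd
  have hne : P * R ≠ 0 := hR ▸ X_pow_finrank_ne_zero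
  have hR0 : R ≠ 0 := right_ne_zero_of_mul hne
  obtain ⟨s, hs⟩ := hd
  refine hu (IsUnit.of_mul_eq_one s ?_)
  refine mul_left_cancel₀ hR0 ?_
  rw [mul_one]
  conv_rhs => rw [hs]
  ring

/-- `x` generates `E` as `F[X]`-module with `X` acting as Frobenius. -/
def IsCyc (F : Type*) {E : Type*} [Field F] [Fintype F] [Field E] [Algebra F E] (x : E) : Prop :=
  ∀ y : E, ∃ r : F[X], aeval (frobLin F E) r x = y

lemma exists_isCyc : ∃ w : E, IsCyc F w := by
  classical
  obtain ⟨w, hw⟩ := exists_linearIndependent_algEquiv_apply F E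
  refine ⟨w, ?_⟩
  have hspan : Submodule.span F (Set.range fun g : Gal(E/F) => g w) = ⊤ := by
    apply hw.span_eq_top_of_card_eq_finrank
    rw [← Nat.card_eq_fintype_card]
    exact IsGalois.card_aut_eq_finrank F E
  let φ : F[X] →ₗ[F] E := (LinearMap.applyₗ w).comp (aeval (frobLin F E)).toLinearMap
  have hle : Submodule.span F (Set.range fun g : Gal(E/F) => g w) ≤ LinearMap.range φ := by
    rw [Submodule.span_le]
    rintro _ ⟨g, rfl⟩
    obtain ⟨n, rfl⟩ := (FiniteField.bijective_frobeniusAlgEquivOfAlgebraic_pow F E).2 g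
    refine ⟨X ^ (n : ℕ), ?_⟩
    simp only [φ, LinearMap.comp_apply, LinearMap.applyₗ_apply_apply, AlgHom.toLinearMap_apply,
      map_pow, aeval_X, frobLin_pow_apply, AlgEquiv.coe_pow,
      FiniteField.coe_frobeniusAlgEquivOfAlgebraic_iterate]
  intro y
  have : y ∈ LinearMap.range φ := hle (hspan ▸ Submodule.mem_top)
  obtain ⟨r, hr⟩ := this
  exact ⟨r, hr⟩

lemma isCyc_of_not_range (x : E) (h : ∀ P : F[X], Irreducible P → P.Monic →
    P ∣ X ^ Module.finrank F E - 1 → ∀ y, aeval (frobLin F E) P y ≠ x) : IsCyc F x := by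
  classical
  obtain ⟨w, hw⟩ := exists_isCyc (F := F) (E := E)
  obtain ⟨r, hr⟩ := hw x
  have hco : IsCoprime r (X ^ Module.finrank F E - 1) := by
    refine isCoprime_of_irreducible_dvd (fun hh => X_pow_finrank_ne_zero hh.2) ?_
    intro z hz hzr hzX
    have hz0 := hz.ne_zero
    have hass : Associated (normalize z) z := normalize_associated z
    obtain ⟨s, hs⟩ := hass.dvd.trans hzr
    refine h (normalize z) (hass.symm.irreducible hz) (monic_normalize hz0)
      (hass.dvd.trans hzX) (aeval (frobLin F E) s w) ?_
    rw [← Module.End.mul_apply, ← map_mul, ← hs, hr]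
  obtain ⟨u, v, huv⟩ := hco
  have hwx : aeval (frobLin F E) u x = w := by
    rw [← hr, ← Module.End.mul_apply, ← map_mul]
    have := congrArg (aeval (frobLin F E)) huv
    rw [map_add, map_mul _ v, aeval_frobLin_X_pow_sub_one, mul_zero, add_zero, map_one] at this
    rw [this, Module.End.one_apply]
  intro y
  obtain ⟨s, hs⟩ := hw y
  exact ⟨s * u, by rw [map_mul, Module.End.mul_apply, hwx, hs]⟩

lemma IsCyc.smul {x : E} (hx : IsCyc F x) {c : F} (hc : c ≠ 0) : IsCyc F (c • x) := by
  intro y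
  obtain ⟨r, hr⟩ := hx y
  refine ⟨C c⁻¹ * r, ?_⟩
  rw [map_mul, Module.End.mul_apply, map_smul, hr, aeval_C, Module.algebraMap_end_apply,
    inv_smul_smul₀ hc]

lemma IsCyc.span {x : E} (hx : IsCyc F x) :
    Submodule.span F (Set.range fun i : Fin (Module.finrank F E) =>
      x ^ Fintype.card F ^ (i : ℕ)) = ⊤ := by
  rw [eq_top_iff]
  rintro y -
  obtain ⟨r, rfl⟩ := hx y
  have hmon : (X ^ Module.finrank F E - 1 : F[X]).Monic :=
    monic_X_pow_sub_C (1 : F) (Module.finrank_pos (R := F) (M := E)).ne'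
  have h1 : aeval (frobLin F E) r = aeval (frobLin F E) (r %ₘ (X ^ Module.finrank F E - 1)) := by
    conv_lhs => rw [← modByMonic_add_div r (X ^ Module.finrank F E - 1)]
    rw [map_add, map_mul, aeval_frobLin_X_pow_sub_one, zero_mul, add_zero]
  have hdeg : (r %ₘ (X ^ Module.finrank F E - 1)).natDegree < Module.finrank F E := by
    have := natDegree_modByMonic_lt r hmon (fun h => by
      have h2 := congrArg natDegree h
      rw [← C_1, natDegree_X_pow_sub_C, natDegree_C] at h2
      exact (Module.finrank_pos (R := F) (M := E)).ne' h2)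
    rwa [← C_1, natDegree_X_pow_sub_C] at this
  rw [h1, aeval_eq_sum_range' hdeg, LinearMap.sum_apply]
  refine Submodule.sum_mem _ fun i hi => ?_
  rw [LinearMap.smul_apply, frobLin_pow_apply]
  exact Submodule.smul_mem _ _ (Submodule.subset_span ⟨⟨i, Finset.mem_range.mp hi⟩, rfl⟩)

lemma IsCyc.linearIndependent {x : E} (hx : IsCyc F x) :
    LinearIndependent F (fun i : Fin (Module.finrank F E) => x ^ Fintype.card F ^ (i : ℕ)) :=
  linearIndependent_of_top_le_span_of_card_eq_finrank hx.span.ge (by simp)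

lemma exists_pow_of_pow_div_eq_one (x : E) (hx : x ≠ 0) (l : ℕ) (hl : l ≠ 0)
    (hd : l ∣ Fintype.card E - 1)
    (h : x ^ ((Fintype.card E - 1) / l) = 1) : ∃ y : E, y ^ l = x := by
  classical
  obtain ⟨g, hg⟩ := IsCyclic.exists_monoid_generator (α := Eˣ)
  obtain ⟨k, hk⟩ := Submonoid.mem_powers_iff _ _ |>.mp (hg (Units.mk0 x hx))
  have hog : orderOf g = Fintype.card E - 1 := by
    rw [← Fintype.card_units, ← Nat.card_eq_fintype_card]
    exact orderOf_eq_card_of_forall_mem_powers hg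
  have h2 : g ^ (k * ((Fintype.card E - 1) / l)) = 1 := by
    rw [pow_mul, hk]
    ext
    simpa using h
  have h3 := orderOf_dvd_of_pow_eq_one h2
  have hpos : 0 < Fintype.card E - 1 := by
    have := Fintype.one_lt_card (α := E); omega
  obtain ⟨d, hd⟩ := hd
  rw [hog, hd, Nat.mul_div_cancel_left _ (Nat.pos_of_ne_zero hl)] at h3
  have hd0 : 0 < d := Nat.pos_of_ne_zero (by rintro rfl; omega)
  have hlk : l ∣ k := Nat.dvd_of_mul_dvd_mul_right hd0 h3
  obtain ⟨j, rfl⟩ := hlk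
  refine ⟨((g ^ j : Eˣ) : E), ?_⟩
  rw [← Units.val_pow_eq_pow_val, ← pow_mul, mul_comm, hk, Units.val_mk0]

lemma card_sub_one_eq : Fintype.card E - 1 =
    ((Fintype.card F ^ Module.finrank F E - 1) / (Fintype.card F - 1)) * (Fintype.card F - 1) := by
  rw [Nat.div_mul_cancel (Nat.sub_one_dvd_pow_sub_one _ _), Module.card_eq_pow_finrank (K := F) (V := E)]

lemma coprime_Q (q m : ℕ) (hq : 2 ≤ q) (h : Nat.gcd m (q - 1) = 1) :
    Nat.Coprime ((q ^ m - 1) / (q - 1)) (q - 1) := by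
  rw [← Nat.geomSum_eq hq]
  have h1 : ∑ i ∈ Finset.range m, q ^ i ≡ ∑ i ∈ Finset.range m, 1 [MOD (q - 1)] := by
    refine Nat.ModEq.sum fun i _ => ?_
    have : q ≡ 1 [MOD (q-1)] := by
      have : q = 1 + (q - 1) := by omega
      conv_lhs => rw [this]
      simp [Nat.ModEq]
    simpa using this.pow i
  have h2 := h1.gcd_eq
  simp only [Finset.sum_const, Finset.card_range, smul_eq_mul, mul_one] at h2
  rw [Nat.Coprime, h2, h]

lemma exists_smul_orderOf (hcop : Nat.gcd (Module.finrank F E) (Fintype.card F - 1) = 1)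
    (x : E) (hx : x ≠ 0)
    (h : ∀ l : ℕ, l.Prime → l ∣ (Fintype.card F ^ Module.finrank F E - 1) / (Fintype.card F - 1) →
      ∀ y : E, y ^ l ≠ x) :
    ∃ c : F, c ≠ 0 ∧
      orderOf (c • x) = (Fintype.card F ^ Module.finrank F E - 1) / (Fintype.card F - 1) := by
  have hq : 2 ≤ Fintype.card F := Fintype.one_lt_card
  have hQc := coprime_Q _ _ hq hcop
  have hnorm : algebraMap F E (Algebra.norm F x) =
      x ^ ((Fintype.card F ^ Module.finrank F E - 1) / (Fintype.card F - 1)) := by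
    rw [FiniteField.algebraMap_norm_eq_pow, Nat.card_eq_fintype_card, Nat.card_eq_fintype_card,
      Module.card_eq_pow_finrank (K := F) (V := E)]
  have hn := card_sub_one_eq (F := F) (E := E)
  generalize hQ : (Fintype.card F ^ Module.finrank F E - 1) / (Fintype.card F - 1) = Q at *
  have hQ0 : 0 < Q := by
    have := Fintype.one_lt_card (α := E)
    rcases Nat.eq_zero_or_pos Q with rfl | h
    · simp at hn; omega
    · exact h
  obtain ⟨t, k, htk⟩ : ∃ t k : ℕ, (Fintype.card F - 1) * t = 1 + Q * k := by
    rcases Nat.lt_or_ge 1 Q with h1 | h1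
    · obtain ⟨t, -, ht⟩ := Nat.exists_mul_mod_eq_one_of_coprime hQc.symm h1
      refine ⟨t, (Fintype.card F - 1) * t / Q, ?_⟩
      have := Nat.mod_add_div ((Fintype.card F - 1) * t) Q
      omega
    · have : Q = 1 := by omega
      subst this
      exact ⟨1, Fintype.card F - 2, by omega⟩
  have hN : Algebra.norm F x ≠ 0 := by
    intro h0
    rw [h0, map_zero] at hnorm
    exact pow_ne_zero _ hx hnorm.symm
  refine ⟨Algebra.norm F x ^ k, pow_ne_zero _ hN, ?_⟩
  have hα : (Algebra.norm F x ^ k) • x = x ^ ((Fintype.card F - 1) * t) := by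
    rw [Algebra.smul_def, map_pow, hnorm, htk, ← pow_mul]
    ring
  have hxn : x ^ (Fintype.card E - 1) = 1 := FiniteField.pow_card_sub_one_eq_one x hx
  rw [hα]
  refine orderOf_eq_of_pow_and_pow_div_prime hQ0 ?_ ?_
  · rw [← pow_mul, show (Fintype.card F - 1) * t * Q = Q * (Fintype.card F - 1) * t by ring, ← hn,
      pow_mul, hxn, one_pow]
  · intro l hl hlQ h1
    have hdl : l ∣ Fintype.card E - 1 := hn ▸ hlQ.mul_right _
    have hdiv : (Fintype.card E - 1) / l = (Q / l) * (Fintype.card F - 1) := by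
      rw [hn, Nat.div_mul_right_comm hlQ]
    have hyt : (x ^ ((Fintype.card E - 1) / l)) ^ t = 1 := by
      rw [← h1, hdiv, ← pow_mul, ← pow_mul]; ring_nf
    have hyl : (x ^ ((Fintype.card E - 1) / l)) ^ l = 1 := by
      rw [← pow_mul, Nat.div_mul_cancel hdl, hxn]
    have hlt : Nat.Coprime l t := by
      rw [hl.coprime_iff_not_dvd]
      intro hd
      have h3 : l ∣ 1 + Q * k := htk ▸ hd.mul_left _
      have h4 : l ∣ Q * k := hlQ.mul_right _
      exact hl.one_lt.ne' (Nat.dvd_one.mp ((Nat.dvd_add_left h4).mp h3))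
    have hy1 : x ^ ((Fintype.card E - 1) / l) = 1 := by
      rw [← orderOf_eq_one_iff, ← Nat.dvd_one]
      refine Dvd.dvd.trans ?_ hlt.gcd_eq_one.dvd
      exact Nat.dvd_gcd (orderOf_dvd_of_pow_eq_one hyl) (orderOf_dvd_of_pow_eq_one hyt)
    obtain ⟨y, hy⟩ := exists_pow_of_pow_div_eq_one x hx l hl.ne_zero hdl hy1
    exact h l hl hlQ y hy

/-- The conclusion of the theorem. -/
def Good (F E : Type*) [Field F] [Fintype F] [Field E] [Algebra F E] : Prop :=
    ∃ α : E,
      LinearIndependent F (fun i : Fin (Module.finrank F E) => α ^ Fintype.card F ^ (i : ℕ)) ∧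
      Submodule.span F (Set.range fun i : Fin (Module.finrank F E) =>
        α ^ Fintype.card F ^ (i : ℕ)) = ⊤ ∧
      orderOf α = (Fintype.card F ^ Module.finrank F E - 1) / (Fintype.card F - 1)

theorem good_of (hcop : Nat.gcd (Module.finrank F E) (Fintype.card F - 1) = 1)
    (x : E) (hx : x ≠ 0)
    (h : ∀ l : ℕ, l.Prime → l ∣ (Fintype.card F ^ Module.finrank F E - 1) / (Fintype.card F - 1) →
      ∀ y : E, y ^ l ≠ x)
    (hP : ∀ P : F[X], Irreducible P → P.Monic →
    P ∣ X ^ Module.finrank F E - 1 → ∀ y, aeval (frobLin F E) P y ≠ x) : Good F E := by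
  obtain ⟨c, hc, ho⟩ := exists_smul_orderOf hcop x hx h
  have hcyc := (isCyc_of_not_range x hP).smul hc
  exact ⟨c • x, hcyc.linearIndependent, hcyc.span, ho⟩

open Classical in
/-- Monic irreducible factors of `X ^ m - 1`. -/
noncomputable def facs (F : Type*) [Field F] (m : ℕ) : Finset F[X] :=
  (UniqueFactorizationMonoid.normalizedFactors (X ^ m - 1 : F[X])).toFinset

lemma mem_facs (m : ℕ) (hm : m ≠ 0) (P : F[X]) :
    P ∈ facs F m ↔ Irreducible P ∧ P.Monic ∧ P ∣ X ^ m - 1 := by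
  classical
  have h0 : (X ^ m - 1 : F[X]) ≠ 0 := (monic_X_pow_sub_C (1 : F) hm).ne_zero
  rw [facs, Multiset.mem_toFinset, Polynomial.mem_normalizedFactors_iff h0]

lemma X_sub_one_mem_facs (m : ℕ) (hm : m ≠ 0) : (X - 1 : F[X]) ∈ facs F m := by
  rw [mem_facs m hm]
  refine ⟨?_, ?_, sub_one_dvd_pow_sub_one X m⟩
  · rw [← C_1]; exact irreducible_X_sub_C 1
  · rw [← C_1]; exact monic_X_sub_C 1

theorem good_of_bound (hcop : Nat.gcd (Module.finrank F E) (Fintype.card F - 1) = 1)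
    (w v : ℕ)
    (hw : ((Fintype.card F ^ Module.finrank F E - 1) / (Fintype.card F - 1)).primeFactors.card ≤ w)
    (hv : (facs F (Module.finrank F E)).card ≤ v)
    (h : (2 ^ w - 1) ^ 2 * (2 ^ v - 1) ^ 2 < Fintype.card F ^ Module.finrank F E) : Good F E := by
  have hm := (Module.finrank_pos (R := F) (M := E)).ne'
  have hcE : Fintype.card E = Fintype.card F ^ Module.finrank F E :=
    Module.card_eq_pow_finrank (K := F) (V := E)
  have hn := card_sub_one_eq (F := F) (E := E)
  rw [← hcE] at h
  have hQ0 : (Fintype.card F ^ Module.finrank F E - 1) / (Fintype.card F - 1) ≠ 0 := by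
    intro h0
    rw [h0] at hn
    have := Fintype.one_lt_card (α := E)
    omega
  obtain ⟨x, hx0, -, h1, h2⟩ := sieve2 (F := F) (E := E)
    ((Fintype.card F ^ Module.finrank F E - 1) / (Fintype.card F - 1)).primeFactors
    (fun l hl => ⟨Nat.prime_of_mem_primeFactors hl, hn ▸ (Nat.dvd_of_mem_primeFactors hl).mul_right _⟩)
    (facs F (Module.finrank F E)) ⟨_, X_sub_one_mem_facs _ hm⟩
    (fun P hP => ⟨((mem_facs _ hm P).mp hP).1, ((mem_facs _ hm P).mp hP).2.1⟩)
    (fun P hP => not_surj_of_dvd P ((mem_facs _ hm P).mp hP).2.2 ((mem_facs _ hm P).mp hP).1.not_isUnit)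
    ∅ (by
      have hp : 0 < ∏ l ∈ ((Fintype.card F ^ Module.finrank F E - 1) /
          (Fintype.card F - 1)).primeFactors, (1 - (l : ℝ)⁻¹) := by
        refine Finset.prod_pos fun l hl => ?_
        have h1 : (1 : ℝ) < l := by exact_mod_cast (Nat.prime_of_mem_primeFactors hl).one_lt
        have := inv_lt_one_of_one_lt₀ h1
        linarith
      rw [Finset.card_empty, Nat.cast_zero]
      refine mul_pos (mul_pos hp (by positivity)) ?_
      generalize ((Fintype.card F ^ Module.finrank F E - 1) / (Fintype.card F - 1)).primeFactors.card
        = a at hw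
      generalize (facs F (Module.finrank F E)).card = b at hv
      exact aux_sqrt_bound a b w v _ hw hv h)
  refine good_of hcop x hx0 (fun l hl hd y => h1 l (Nat.mem_primeFactors.mpr ⟨hl, hd, hQ0⟩) y) ?_
  exact fun P hP hPm hd y => h2 P ((mem_facs _ hm P).mpr ⟨hP, hPm, hd⟩) y
end part4


open Polynomial

set_option linter.unusedSectionVars false

section part5
variable {F : Type*} [Field F] [Fintype F]

lemma facs_subset (p k m' : ℕ) [hp : Fact p.Prime] [CharP F p] (hm : m' ≠ 0) :
    facs F (p ^ k * m') ⊆ facs F m' := by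
  intro P hP
  rw [mem_facs _ (mul_ne_zero (pow_ne_zero _ hp.out.ne_zero) hm)] at hP
  rw [mem_facs _ hm]
  refine ⟨hP.1, hP.2.1, ?_⟩
  have h : (X ^ (p ^ k * m') - 1 : F[X]) = (X ^ m' - 1) ^ p ^ k := by
    rw [sub_pow_char_pow, one_pow, ← pow_mul, mul_comm]
  exact hP.1.prime.dvd_of_dvd_pow (h ▸ hP.2.2)

lemma prod_facs_dvd (A : Finset F[X]) (hA : ∀ P ∈ A, Irreducible P ∧ P.Monic) (G : F[X])
    (h : ∀ P ∈ A, P ∣ G) : ∏ P ∈ A, P ∣ G := by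
  refine Finset.prod_dvd_of_coprime ?_ h
  intro P hP R hR hne
  rw [Function.onFun, (hA P hP).1.coprime_iff_not_dvd]
  intro hd
  exact hne (eq_of_monic_of_associated (hA P hP).2 (hA R hR).2
    ((hA P hP).1.associated_of_dvd (hA R hR).1 hd))

lemma sum_natDegree_le (A : Finset F[X]) (hA : ∀ P ∈ A, Irreducible P ∧ P.Monic) (g : ℕ)
    (hg : g ≠ 0) (h : ∀ P ∈ A, P ∣ X ^ g - 1) : ∑ P ∈ A, P.natDegree ≤ g := by
  have h1 := natDegree_le_of_dvd (prod_facs_dvd A hA _ h) (monic_X_pow_sub_C (1 : F) hg).ne_zero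
  rw [natDegree_prod _ _ fun P hP => (hA P hP).1.ne_zero] at h1
  rwa [← C_1, natDegree_X_pow_sub_C] at h1

lemma dvd_X_pow_gcd (m : ℕ) (hm : m ≠ 0) (P : F[X]) (hP : P ∈ facs F m) :
    P ∣ X ^ (Nat.gcd m (Fintype.card F ^ P.natDegree - 1)) - 1 := by
  rw [mem_facs _ hm] at hP
  obtain ⟨hi, hmo, hd⟩ := hP
  have : Fact (Irreducible P) := ⟨hi⟩
  have hfin : Module.Finite F (AdjoinRoot P) := (AdjoinRoot.powerBasis hi.ne_zero).finite
  have : Finite (AdjoinRoot P) := Module.finite_of_finite F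
  have := Fintype.ofFinite (AdjoinRoot P)
  have hcard : Fintype.card (AdjoinRoot P) = Fintype.card F ^ P.natDegree := by
    rw [Module.card_eq_pow_finrank (K := F) (V := AdjoinRoot P),
      (AdjoinRoot.powerBasis hi.ne_zero).finrank, AdjoinRoot.powerBasis_dim]
  have key : ∀ n : ℕ, P ∣ X ^ n - 1 ↔ AdjoinRoot.root P ^ n = 1 := by
    intro n
    rw [← AdjoinRoot.mk_eq_zero, map_sub, map_pow, map_one, AdjoinRoot.mk_X, sub_eq_zero]
  rw [key] at hd ⊢
  have h0 : AdjoinRoot.root P ≠ 0 := by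
    intro h0
    rw [h0, zero_pow hm] at hd
    exact zero_ne_one hd
  have h1 := FiniteField.pow_card_sub_one_eq_one _ h0
  rw [hcard] at h1
  exact orderOf_dvd_iff_pow_eq_one.mp
    (Nat.dvd_gcd (orderOf_dvd_of_pow_eq_one hd) (orderOf_dvd_of_pow_eq_one h1))

lemma eq_of_natDegree_one (m : ℕ) (hm : m ≠ 0) (hcop : Nat.gcd m (Fintype.card F - 1) = 1)
    (P : F[X]) (hP : P ∈ facs F m) (h1 : P.natDegree = 1) : P = X - 1 := by
  have h := dvd_X_pow_gcd m hm P hP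
  rw [h1, pow_one, hcop, pow_one] at h
  have hP' := (mem_facs m hm P).mp hP
  have hX := (mem_facs m hm (X - 1 : F[X])).mp (X_sub_one_mem_facs m hm)
  exact eq_of_monic_of_associated hP'.2.1 hX.2.1 (hP'.1.associated_of_dvd hX.1 h)

open Classical in
lemma card_natDegree_le (m : ℕ) (hm : m ≠ 0) (d : ℕ) (hd : 2 ≤ d) :
    ((facs F m).filter fun P => P.natDegree = d).card ≤
      (Nat.gcd m (Fintype.card F ^ d - 1) - 1) / d := by
  have hg : Nat.gcd m (Fintype.card F ^ d - 1) ≠ 0 := (Nat.gcd_pos_of_pos_left _ (by omega)).ne'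
  have hX : (X - 1 : F[X]).natDegree = 1 := by rw [← C_1, natDegree_X_sub_C]
  have hnot : (X - 1 : F[X]) ∉ (facs F m).filter fun P => P.natDegree = d := by
    intro h
    rw [Finset.mem_filter, hX] at h
    omega
  have h1 := sum_natDegree_le (insert (X - 1 : F[X]) ((facs F m).filter fun P => P.natDegree = d))
    (by
      intro P hP
      have hP' : P ∈ facs F m := by
        rcases Finset.mem_insert.mp hP with rfl | h
        · exact X_sub_one_mem_facs m hm
        · exact (Finset.mem_filter.mp h).1
      rw [mem_facs m hm] at hP'
      exact ⟨hP'.1, hP'.2.1⟩) _ hg (by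
      intro P hP
      rcases Finset.mem_insert.mp hP with rfl | h
      · exact sub_one_dvd_pow_sub_one X _
      · rw [Finset.mem_filter] at h
        have := dvd_X_pow_gcd m hm P h.1
        rwa [h.2] at this)
  rw [Finset.sum_insert hnot, hX, Finset.sum_congr rfl (g := fun _ => d)
    (fun P hP => (Finset.mem_filter.mp hP).2), Finset.sum_const, smul_eq_mul] at h1
  rw [Nat.le_div_iff_mul_le (by omega)]
  omega

theorem facs_card_le' (m D : ℕ) (hm : m ≠ 0) (hD : 1 ≤ D)
    (hcop : Nat.gcd m (Fintype.card F - 1) = 1) :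
    (D + 1) * (facs F m).card ≤ m + D + ∑ d ∈ Finset.Icc 2 D,
      (D + 1 - d) * ((Nat.gcd m (Fintype.card F ^ d - 1) - 1) / d) := by
  classical
  have hT : ∀ P ∈ facs F m, Irreducible P ∧ P.Monic := fun P hP =>
    ⟨((mem_facs m hm P).mp hP).1, ((mem_facs m hm P).mp hP).2.1⟩
  have h1 : (D + 1) * (facs F m).card ≤ ∑ P ∈ facs F m, P.natDegree +
      ∑ P ∈ facs F m, (D + 1 - P.natDegree) := by
    rw [← Finset.sum_add_distrib, mul_comm, ← smul_eq_mul, ← Finset.sum_const]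
    exact Finset.sum_le_sum fun P _ => by omega
  have h2 : ∑ P ∈ facs F m, P.natDegree ≤ m := sum_natDegree_le _ hT m hm
    fun P hP => ((mem_facs m hm P).mp hP).2.2
  have h3 : ∑ P ∈ facs F m, (D + 1 - P.natDegree) =
      ∑ d ∈ Finset.Icc 1 D, (D + 1 - d) * ((facs F m).filter fun P => P.natDegree = d).card := by
    have e1 : ∑ P ∈ facs F m, (D + 1 - P.natDegree) =
        ∑ P ∈ (facs F m).filter (fun P => P.natDegree ∈ Finset.Icc 1 D), (D + 1 - P.natDegree) := by
      refine (Finset.sum_filter_of_ne fun P hP hne => ?_).symm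
      have := (hT P hP).1.natDegree_pos
      rw [Finset.mem_Icc]; omega
    rw [e1, ← Finset.sum_fiberwise_of_maps_to (t := Finset.Icc 1 D) (g := natDegree)
      (fun P hP => (Finset.mem_filter.mp hP).2)]
    refine Finset.sum_congr rfl fun d hd => ?_
    rw [Finset.filter_filter, mul_comm, ← smul_eq_mul, ← Finset.sum_const]
    refine Finset.sum_congr ?_ fun P hP => ?_
    · ext P
      simp only [Finset.mem_filter]
      constructor
      · rintro ⟨a, b, c⟩; exact ⟨a, c⟩
      · rintro ⟨a, c⟩; exact ⟨a, c ▸ hd, c⟩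
    · rw [(Finset.mem_filter.mp hP).2]
  have h4 : ((facs F m).filter fun P => P.natDegree = 1).card ≤ 1 := by
    rw [Finset.card_le_one]
    intro P hP R hR
    rw [Finset.mem_filter] at hP hR
    rw [eq_of_natDegree_one m hm hcop P hP.1 hP.2, eq_of_natDegree_one m hm hcop R hR.1 hR.2]
  have h5 : ∑ d ∈ Finset.Icc 1 D, (D + 1 - d) * ((facs F m).filter fun P => P.natDegree = d).card ≤
      D + ∑ d ∈ Finset.Icc 2 D,
      (D + 1 - d) * ((Nat.gcd m (Fintype.card F ^ d - 1) - 1) / d) := by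
    rw [← Finset.insert_Icc_add_one_left_eq_Icc hD, Finset.sum_insert (by simp)]
    refine Nat.add_le_add ?_ (Finset.sum_le_sum fun d hd => ?_)
    · calc (D + 1 - 1) * _ ≤ (D + 1 - 1) * 1 := Nat.mul_le_mul_left _ h4
        _ = D := by omega
    · exact Nat.mul_le_mul_left _ (card_natDegree_le m hm d (Finset.mem_Icc.mp hd).1)
  omega

theorem facs_card_le (p k m' D : ℕ) [hp : Fact p.Prime] [CharP F p] (hm : m' ≠ 0) (hD : 1 ≤ D)
    (hcop : Nat.gcd (p ^ k * m') (Fintype.card F - 1) = 1) :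
    (D + 1) * (facs F (p ^ k * m')).card ≤ m' + D + ∑ d ∈ Finset.Icc 2 D,
      (D + 1 - d) * ((Nat.gcd m' (Fintype.card F ^ d - 1) - 1) / d) :=
  (Nat.mul_le_mul_left _ (Finset.card_le_card (facs_subset p k m' hm))).trans
    (facs_card_le' m' D hm hD (Nat.Coprime.coprime_dvd_left (Dvd.intro_left _ rfl) hcop))
end part5

section omega

lemma prod_large_le (Q L : ℕ) (hQ : Q ≠ 0) :
    L ^ (Q.primeFactors.filter fun l => ¬ l < L).card * ∏ l ∈ Q.primeFactors.filter (fun l => l < L), l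
      ≤ Q := by
  have h1 : ∏ l ∈ Q.primeFactors, l ≤ Q :=
    Nat.le_of_dvd (Nat.pos_of_ne_zero hQ) (Nat.prod_primeFactors_dvd Q)
  rw [← Finset.prod_filter_mul_prod_filter_not Q.primeFactors (fun l => l < L), mul_comm] at h1
  refine le_trans (Nat.mul_le_mul_right _ ?_) h1
  refine Finset.pow_card_le_prod _ _ _ fun l hl => ?_
  have := (Finset.mem_filter.mp hl).2
  omega

lemma omega16 (Q : ℕ) (hQ : Q ≠ 0) (hodd : ¬ 2 ∣ Q) :
    16 ^ Q.primeFactors.card * 15015 ≤ 16 ^ 5 * Q := by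
  have h := prod_large_le Q 16 hQ
  have hsub : Q.primeFactors.filter (fun l => l < 16) ⊆ ({3, 5, 7, 11, 13} : Finset ℕ) := by
    intro l hl
    rw [Finset.mem_filter, Nat.mem_primeFactors] at hl
    obtain ⟨⟨hp, hd, -⟩, hlt⟩ := hl
    have h2 : l ≠ 2 := by rintro rfl; exact hodd hd
    interval_cases l <;> first | decide | (exfalso; exact h2 rfl) | (exfalso; revert hp; norm_num)
  have hc := Finset.card_filter_add_card_filter_not (s := Q.primeFactors) (fun l => l < 16)
  have hc2 := Finset.card_sdiff_add_card_eq_card hsub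
  have hpr := Finset.prod_sdiff hsub (f := fun l => l)
  have ht : ∏ l ∈ ({3, 5, 7, 11, 13} : Finset ℕ) \ Q.primeFactors.filter (fun l => l < 16), l ≤
      16 ^ (({3, 5, 7, 11, 13} : Finset ℕ) \ Q.primeFactors.filter (fun l => l < 16)).card := by
    refine Finset.prod_le_pow_card _ _ _ fun l hl => ?_
    have := (Finset.mem_sdiff.mp hl).1
    have hall : ∀ l ∈ ({3, 5, 7, 11, 13} : Finset ℕ), l ≤ 16 := by decide
    exact hall l this
  generalize Q.primeFactors.filter (fun l => l < 16) = s at *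
  generalize (Q.primeFactors.filter (fun l => ¬ l < 16)).card = r at *
  have h15 : ∏ l ∈ ({3, 5, 7, 11, 13} : Finset ℕ), l = 15015 := by decide
  have h5 : ({3, 5, 7, 11, 13} : Finset ℕ).card = 5 := by decide
  rw [h15] at hpr
  rw [h5] at hc2
  generalize ({3, 5, 7, 11, 13} : Finset ℕ) \ s = t at *
  rw [← hc, ← hpr, ← hc2, pow_add, pow_add]
  calc 16 ^ s.card * 16 ^ r * ((∏ l ∈ t, l) * ∏ l ∈ s, l)
      ≤ 16 ^ s.card * 16 ^ r * (16 ^ t.card * ∏ l ∈ s, l) := by gcongr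
    _ = 16 ^ t.card * 16 ^ s.card * (16 ^ r * ∏ l ∈ s, l) := by ring
    _ ≤ _ := by gcongr

/-- Upper bound for the number of prime factors of an odd number. -/
def omB (Q : ℕ) : ℕ :=
  let s := ([3, 5, 7, 11, 13, 17, 19, 23, 29, 31] : List ℕ).filter (fun l => Q % l = 0)
  s.length + (List.range 20).countP (fun r => 32 ^ (r + 1) * s.prod ≤ Q)

lemma omega32 (Q : ℕ) (hQ : Q ≠ 0) (hodd : ¬ 2 ∣ Q) (hlt : Q < 32 ^ 20) :
    Q.primeFactors.card ≤ omB Q := by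
  have h := prod_large_le Q 32 hQ
  have hc := Finset.card_filter_add_card_filter_not (s := Q.primeFactors) (fun l => l < 32)
  have hs : Q.primeFactors.filter (fun l => l < 32) =
      (([3, 5, 7, 11, 13, 17, 19, 23, 29, 31] : List ℕ).filter (fun l => Q % l = 0)).toFinset := by
    ext l
    rw [List.mem_toFinset, List.mem_filter, Finset.mem_filter, Nat.mem_primeFactors,
      decide_eq_true_iff, ← Nat.dvd_iff_mod_eq_zero]
    constructor
    · rintro ⟨⟨hp, hd, -⟩, hlt⟩
      have h2 : l ≠ 2 := by rintro rfl; exact hodd hd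
      refine ⟨?_, hd⟩
      clear hd h hc
      interval_cases l <;> first | decide | (exfalso; exact h2 rfl) | (exfalso; revert hp; norm_num)
    · rintro ⟨hm, hd⟩
      have : l.Prime ∧ l < 32 := by
        simp only [List.mem_cons, List.not_mem_nil, or_false] at hm
        rcases hm with rfl | rfl | rfl | rfl | rfl | rfl | rfl | rfl | rfl | rfl <;> norm_num
      exact ⟨⟨this.1, hd, hQ⟩, this.2⟩
  have hnd : (([3, 5, 7, 11, 13, 17, 19, 23, 29, 31] : List ℕ).filter (fun l => Q % l = 0)).Nodup :=
    List.Nodup.filter _ (by decide)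
  rw [hs] at hc h
  rw [List.toFinset_card_of_nodup hnd] at hc
  rw [List.prod_toFinset _ hnd, List.map_id'] at h
  unfold omB
  generalize ([3, 5, 7, 11, 13, 17, 19, 23, 29, 31] : List ℕ).filter (fun l => Q % l = 0) = s at *
  generalize (Q.primeFactors.filter (fun l => ¬ l < 32)).card = r at *
  rw [← hc]
  refine Nat.add_le_add_left ?_ _
  have hpos : 0 < s.prod := by
    rcases Nat.eq_zero_or_pos s.prod with h0 | h0
    · have : (0 : ℕ) ∈ s.toFinset := List.mem_toFinset.mpr (List.prod_eq_zero_iff.mp h0)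
      rw [← hs, Finset.mem_filter] at this
      exact absurd (Nat.prime_of_mem_primeFactors this.1) Nat.not_prime_zero
    · exact h0
  have hr : r < 20 := by
    by_contra hr
    push Not at hr
    have h1 : 32 ^ 20 ≤ 32 ^ r := Nat.pow_le_pow_right (by norm_num) hr
    have h2 : 32 ^ r * 1 ≤ 32 ^ r * s.prod := Nat.mul_le_mul_left _ hpos
    omega
  have hsub : (List.range r).Sublist (List.range 20) := List.range_sublist.mpr hr.le
  refine le_trans ?_ (hsub.countP_le)
  refine le_of_eq ?_
  have hcount : (List.range r).countP (fun r => decide (32 ^ (r + 1) * s.prod ≤ Q)) =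
      (List.range r).length := by
    rw [List.countP_eq_length]
    intro a ha
    rw [List.mem_range] at ha
    rw [decide_eq_true_iff]
    exact le_trans (Nat.mul_le_mul_right _ (Nat.pow_le_pow_right (by norm_num) (by omega))) h
  rw [hcount, List.length_range]
end omega


open Polynomial

set_option linter.unusedSectionVars false

section part6

/-- Remove factors `p` from `m`. -/
def stripP (p : ℕ) : ℕ → ℕ → ℕ
  | 0, m => m
  | n + 1, m => if m % p = 0 then stripP p n (m / p) else m

lemma stripP_spec (p n m : ℕ) : ∃ k, m = p ^ k * stripP p n m := by
  induction n generalizing m with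
  | zero => exact ⟨0, by simp [stripP]⟩
  | succ n ih =>
    rw [stripP]
    split_ifs with h
    · obtain ⟨k, hk⟩ := ih (m / p)
      refine ⟨k + 1, ?_⟩
      rw [pow_succ', mul_assoc, ← hk, Nat.mul_div_cancel' (Nat.dvd_of_mod_eq_zero h)]
    · exact ⟨0, by simp⟩

/-- The bound for the number of irreducible factors with parameter `D`. -/
def OmD (q m D : ℕ) : ℕ :=
  (m + D + ∑ d ∈ Finset.Icc 2 D, (D + 1 - d) * ((Nat.gcd m (q ^ d - 1) - 1) / d)) / (D + 1)

/-- The decidable criterion. -/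
def chk (p q m : ℕ) : Bool :=
  let Q := (q ^ m - 1) / (q - 1)
  let w := omB Q
  let m' := stripP p 6 m
  decide (Q < 32 ^ 20) &&
  (List.range 6).any fun D => decide ((2 ^ w - 1) ^ 2 * (2 ^ OmD q m' (D + 1) - 1) ^ 2 < q ^ m)

variable {F E : Type*} [Field F] [Fintype F] [Field E] [Fintype E] [Algebra F E]

lemma Q_ne_zero : (Fintype.card F ^ Module.finrank F E - 1) / (Fintype.card F - 1) ≠ 0 := by
  intro h0
  have hn := card_sub_one_eq (F := F) (E := E)
  rw [h0] at hn
  have := Fintype.one_lt_card (α := E)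
  omega

lemma Q_odd (hcop : Nat.gcd (Module.finrank F E) (Fintype.card F - 1) = 1) :
    ¬ 2 ∣ (Fintype.card F ^ Module.finrank F E - 1) / (Fintype.card F - 1) := by
  have hq : 2 ≤ Fintype.card F := Fintype.one_lt_card
  intro h2
  have hQc := coprime_Q _ _ hq hcop
  have hn := card_sub_one_eq (F := F) (E := E)
  rw [Module.card_eq_pow_finrank (K := F) (V := E)] at hn
  rcases Nat.even_or_odd (Fintype.card F) with he | ho
  · have h3 : 2 ∣ Fintype.card F ^ Module.finrank F E :=
      dvd_pow he.two_dvd (Module.finrank_pos (R := F) (M := E)).ne'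
    have h4 : 2 ∣ Fintype.card F ^ Module.finrank F E - 1 := by
      rw [hn]; exact h2.mul_right _
    have h5 : 0 < Fintype.card F ^ Module.finrank F E := by positivity
    omega
  · have h3 : 2 ∣ Fintype.card F - 1 := by
      obtain ⟨a, ha⟩ := ho
      exact ⟨a, by omega⟩
    have := Nat.dvd_gcd h2 h3
    rw [hQc.gcd_eq_one] at this
    omega

lemma facs_card_le_OmD (p D : ℕ) [hp : Fact p.Prime] [CharP F p]
    (m n : ℕ) (hm : m ≠ 0) (hcop : Nat.gcd m (Fintype.card F - 1) = 1) (hD : 1 ≤ D) :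
    (facs F m).card ≤ OmD (Fintype.card F) (stripP p n m) D := by
  obtain ⟨k, hk⟩ := stripP_spec p n m
  have hm' : stripP p n m ≠ 0 := by
    intro h
    rw [h, mul_zero] at hk
    exact hm hk
  have h := facs_card_le (F := F) p k (stripP p n m) D hm' hD (by rwa [← hk])
  rw [← hk] at h
  rw [OmD, Nat.le_div_iff_mul_le (by omega), mul_comm]
  exact h

theorem good_of_chk (p q m : ℕ) [hp : Fact p.Prime] [CharP F p] (hF : Fintype.card F = q)
    (hm : Module.finrank F E = m) (hcop : Nat.gcd m (q - 1) = 1) (h : chk p q m = true) :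
    Good F E := by
  subst hF hm
  simp only [chk, Bool.and_eq_true, decide_eq_true_eq, List.any_eq_true, List.mem_range] at h
  obtain ⟨h1, D, hD, h2⟩ := h
  exact good_of_bound hcop _ _ (omega32 _ Q_ne_zero (Q_odd hcop) h1)
    (facs_card_le_OmD p (D + 1) _ 6 (Module.finrank_pos (R := F) (M := E)).ne' hcop (by omega)) h2

theorem good_of_16 (hcop : Nat.gcd (Module.finrank F E) (Fintype.card F - 1) = 1)
    (h : 16 ^ 5 * 16 ^ (facs F (Module.finrank F E)).card ≤
      15015 * ((Fintype.card F - 1) * Fintype.card F ^ Module.finrank F E)) : Good F E := by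
  refine good_of_bound hcop _ _ le_rfl le_rfl ?_
  have h1 := omega16 _ (Q_ne_zero (F := F) (E := E)) (Q_odd hcop)
  have hn := card_sub_one_eq (F := F) (E := E)
  rw [Module.card_eq_pow_finrank (K := F) (V := E)] at hn
  have hq : 2 ≤ Fintype.card F := Fintype.one_lt_card
  have hN : 0 < Fintype.card F ^ Module.finrank F E := by positivity
  generalize (Fintype.card F ^ Module.finrank F E - 1) / (Fintype.card F - 1) = Q at *
  generalize (facs F (Module.finrank F E)).card = b at *
  generalize Fintype.card F ^ Module.finrank F E = N at *
  obtain ⟨r, hr⟩ : ∃ r, Fintype.card F - 1 = r := ⟨_, rfl⟩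
  rw [hr] at h hn
  have hr0 : 0 < r := by omega
  generalize Q.primeFactors.card = a at *
  have hlt : Q * r < N := by omega
  have key : 16 ^ a * 16 ^ b < N ^ 2 := by
    by_contra hc
    push Not at hc
    have e1 : N ^ 2 * (15015 * r) ≤ (16 ^ a * 16 ^ b) * (15015 * r) := Nat.mul_le_mul_right _ hc
    have e2 : (16 ^ a * 15015) * (16 ^ b * r) ≤ (16 ^ 5 * Q) * (16 ^ b * r) :=
      Nat.mul_le_mul_right _ h1
    have e3 : (16 ^ 5 * 16 ^ b) * (Q * r) < (16 ^ 5 * 16 ^ b) * N :=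
      Nat.mul_lt_mul_of_pos_left hlt (by positivity)
    have e4 : (16 ^ 5 * 16 ^ b) * N ≤ (15015 * (r * N)) * N := Nat.mul_le_mul_right _ h
    have f1 : (16 ^ a * 16 ^ b) * (15015 * r) = (16 ^ a * 15015) * (16 ^ b * r) := by ring
    have f2 : (16 ^ 5 * Q) * (16 ^ b * r) = (16 ^ 5 * 16 ^ b) * (Q * r) := by ring
    have f3 : (15015 * (r * N)) * N = N ^ 2 * (15015 * r) := by ring
    omega
  have e1 : (2 ^ a - 1) ^ 2 ≤ 4 ^ a := by
    calc (2 ^ a - 1) ^ 2 ≤ (2 ^ a) ^ 2 := Nat.pow_le_pow_left (Nat.sub_le _ _) 2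
      _ = 4 ^ a := by rw [← pow_mul, mul_comm, pow_mul]; norm_num
  have e2 : (2 ^ b - 1) ^ 2 ≤ 4 ^ b := by
    calc (2 ^ b - 1) ^ 2 ≤ (2 ^ b) ^ 2 := Nat.pow_le_pow_left (Nat.sub_le _ _) 2
      _ = 4 ^ b := by rw [← pow_mul, mul_comm, pow_mul]; norm_num
  refine lt_of_le_of_lt (Nat.mul_le_mul e1 e2) ?_
  have e3 : (4 ^ a * 4 ^ b) ^ 2 < N ^ 2 := by
    refine lt_of_eq_of_lt ?_ key
    rw [mul_pow, ← pow_mul, ← pow_mul, mul_comm a, mul_comm b, pow_mul, pow_mul]; norm_num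
  exact lt_of_pow_lt_pow_left₀ 2 (by positivity) e3

theorem good_of_one (hm : Module.finrank F E = 1) : Good F E := by
  have hq : 2 ≤ Fintype.card F := Fintype.one_lt_card
  refine good_of_bound (by rw [hm]; simp) 0 (facs F (Module.finrank F E)).card ?_ le_rfl ?_
  · rw [hm, pow_one, Nat.div_self (by omega)]; simp
  · simp only [pow_zero, Nat.sub_self, ne_eq, OfNat.ofNat_ne_zero, not_false_eq_true, zero_pow, zero_mul]
    positivity

/-- Generic growth lemma. -/
lemma growth (A a b q m m0 : ℕ) (hab : a ≤ q) (h0 : A * a ^ m0 ≤ b * q ^ m0) (hm : m0 ≤ m) :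
    A * a ^ m ≤ b * q ^ m := by
  obtain ⟨k, rfl⟩ := Nat.exists_eq_add_of_le hm
  rw [pow_add, pow_add, ← mul_assoc, ← mul_assoc]
  exact Nat.mul_le_mul h0 (Nat.pow_le_pow_left hab k)

theorem good_D1 (hcop : Nat.gcd (Module.finrank F E) (Fintype.card F - 1) = 1) (m0 : ℕ)
    (hm : m0 ≤ Module.finrank F E) (hq : 4 ≤ Fintype.card F)
    (h : (16 ^ 5 * 4) * 4 ^ m0 ≤ (15015 * (Fintype.card F - 1)) * Fintype.card F ^ m0) :
    Good F E := by
  refine good_of_16 hcop ?_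
  have hf := facs_card_le' (F := F) (Module.finrank F E) 1
    (Module.finrank_pos (R := F) (M := E)).ne' le_rfl hcop
  have h1 := growth _ _ _ _ _ _ hq h hm
  simp at hf
  have h2 : 16 ^ (facs F (Module.finrank F E)).card ≤ 4 * 4 ^ Module.finrank F E := by
    rw [show (16 : ℕ) = 4 ^ 2 by norm_num, ← pow_mul, ← pow_succ']
    exact Nat.pow_le_pow_right (by norm_num) hf
  calc _ ≤ 16 ^ 5 * (4 * 4 ^ Module.finrank F E) := Nat.mul_le_mul_left _ h2
    _ ≤ _ := by rw [← mul_assoc, ← mul_assoc]; exact h1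

theorem good_Dgen (hcop : Nat.gcd (Module.finrank F E) (Fintype.card F - 1) = 1) (m0 D c : ℕ)
    (hD : D ≠ 0)
    (hm : m0 ≤ Module.finrank F E) (hq : 16 ≤ Fintype.card F ^ D)
    (hf : D * (facs F (Module.finrank F E)).card ≤ Module.finrank F E + c)
    (h : ((16 ^ 5) ^ D * 16 ^ c) * 16 ^ m0 ≤
      (15015 * (Fintype.card F - 1)) ^ D * (Fintype.card F ^ D) ^ m0) :
    Good F E := by
  refine good_of_16 hcop ?_
  have h1 := growth _ _ _ _ _ _ hq h hm
  rw [← Nat.pow_le_pow_iff_left hD]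
  have e1 : (16 ^ 5 * 16 ^ (facs F (Module.finrank F E)).card) ^ D =
      (16 ^ 5) ^ D * 16 ^ (D * (facs F (Module.finrank F E)).card) := by
    rw [mul_pow, ← pow_mul 16 (facs F (Module.finrank F E)).card D,
      mul_comm (facs F (Module.finrank F E)).card D]
  have e2 : (15015 * ((Fintype.card F - 1) * Fintype.card F ^ Module.finrank F E)) ^ D =
      (15015 * (Fintype.card F - 1)) ^ D * (Fintype.card F ^ D) ^ Module.finrank F E := by
    rw [← mul_assoc, mul_pow _ (Fintype.card F ^ _), ← pow_mul, ← pow_mul, mul_comm D]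
  rw [e1, e2]
  refine le_trans (le_trans (Nat.mul_le_mul_left _ (Nat.pow_le_pow_right (by norm_num) hf)) ?_) h1
  rw [pow_add, mul_assoc, mul_comm (16 ^ c)]

lemma chk_all2 : ∀ m ∈ Finset.Icc 1 80, m = 3 ∨ m = 6 ∨ m = 15 ∨ chk 2 2 m = true := by
  decide +kernel
lemma chk_all3 : ∀ m ∈ Finset.Icc 1 32, Nat.gcd m 2 = 1 → chk 3 3 m = true := by decide +kernel
lemma chk_all4 : ∀ m ∈ Finset.Icc 1 17, Nat.gcd m 3 = 1 → chk 2 4 m = true := by decide +kernel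
lemma chk_all5 : ∀ m ∈ Finset.Icc 1 20, Nat.gcd m 4 = 1 → chk 5 5 m = true := by decide +kernel
lemma chk_all7 : ∀ m ∈ Finset.Icc 1 7, Nat.gcd m 6 = 1 → chk 7 7 m = true := by decide +kernel
lemma chk_all8 : ∀ m ∈ Finset.Icc 1 6, Nat.gcd m 7 = 1 → chk 2 8 m = true := by decide +kernel
lemma chk_all9 : ∀ m ∈ Finset.Icc 1 5, Nat.gcd m 8 = 1 → chk 3 9 m = true := by decide +kernel
lemma chk_all11 : ∀ m ∈ Finset.Icc 1 4, Nat.gcd m 10 = 1 → chk 11 11 m = true := by decide +kernel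
end part6


open Polynomial

set_option linter.unusedSectionVars false

section part7
variable {F E : Type*} [Field F] [Fintype F] [Field E] [Fintype E] [Algebra F E]

lemma mem_range_of_ann (P R : F[X]) (hPR : P * R = X ^ Module.finrank F E - 1) (x : E)
    (h : aeval (frobLin F E) R x = 0) : ∃ y, aeval (frobLin F E) P y = x := by
  obtain ⟨w, hw⟩ := exists_isCyc (F := F) (E := E)
  obtain ⟨r, hr⟩ := hw x
  have h0 : aeval (frobLin F E) (R * r) = 0 := by
    ext y
    obtain ⟨s, rfl⟩ := hw y
    rw [← Module.End.mul_apply, ← map_mul, mul_comm, map_mul, Module.End.mul_apply, map_mul,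
      Module.End.mul_apply, hr, h, map_zero, LinearMap.zero_apply]
  have hd := minpoly.dvd F (frobLin F E) h0
  rw [minpoly_frobLin, ← hPR, mul_comm P] at hd
  have hR : R ≠ 0 := by
    rintro rfl
    rw [mul_zero] at hPR
    exact X_pow_finrank_ne_zero hPR.symm
  obtain ⟨s, rfl⟩ := (mul_dvd_mul_iff_left hR).mp hd
  refine ⟨aeval (frobLin F E) s w, ?_⟩
  rw [← Module.End.mul_apply, ← map_mul, hr]

lemma facs_ok (hm : Module.finrank F E ≠ 0) :
    (facs F (Module.finrank F E)).Nonempty ∧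
    (∀ P ∈ facs F (Module.finrank F E), Irreducible P ∧ P.Monic) ∧
    (∀ P ∈ facs F (Module.finrank F E), ¬ Function.Surjective (aeval (frobLin F E) P)) :=
  ⟨⟨_, X_sub_one_mem_facs _ hm⟩,
    (fun P hP => ⟨((mem_facs _ hm P).mp hP).1, ((mem_facs _ hm P).mp hP).2.1⟩),
    (fun P hP => not_surj_of_dvd P ((mem_facs _ hm P).mp hP).2.2
      ((mem_facs _ hm P).mp hP).1.not_isUnit)⟩

open Classical in
lemma card_pow_eq_one_le (n : ℕ) (hn : 0 < n) :
    (Finset.univ.filter fun x : E => x ^ n = 1).card ≤ n := by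
  refine le_trans (Finset.card_le_card (t := (nthRoots n (1 : E)).toFinset) ?_)
    ((Multiset.toFinset_card_le _).trans (card_nthRoots n 1))
  intro x hx
  rw [Multiset.mem_toFinset, mem_nthRoots hn]
  exact (Finset.mem_filter.mp hx).2

theorem good_2_3 [CharP F 2] (hF : Fintype.card F = 2) (hm : Module.finrank F E = 3) : Good F E := by
  have : Fact (Nat.Prime 2) := ⟨Nat.prime_two⟩
  have hcE : Fintype.card E = 8 := by
    rw [Module.card_eq_pow_finrank (K := F) (V := E), hF, hm]; norm_num
  have hcop : Nat.gcd (Module.finrank F E) (Fintype.card F - 1) = 1 := by rw [hF, hm]; rfl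
  obtain ⟨f1, f2, f3⟩ := facs_ok (F := F) (E := E) (by omega)
  have hf := facs_card_le_OmD (F := F) 2 1 3 6 (by norm_num) (by rw [hF]; norm_num) le_rfl
  rw [hF, show OmD 2 (stripP 2 6 3) 1 = 2 by decide +kernel] at hf
  obtain ⟨x, hx0, hxB, -, hx⟩ := sieve2 (F := F) (E := E) ∅ (by simp)
    (facs F (Module.finrank F E)) f1 f2 f3 {1} (by
      rw [hm, hcE]
      have h1 : (1 / 2 : ℝ) ^ 2 ≤ (1 / 2) ^ (facs F 3).card :=
        pow_le_pow_of_le_one (by norm_num) (by norm_num) hf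
      rw [one_div, inv_pow] at h1
      rw [inv_pow] at h1
      simp
      norm_num at h1 ⊢
      linarith)
  refine good_of hcop x hx0 ?_
    (fun P hP hPm hd y => hx P ((mem_facs _ (by omega) P).mpr ⟨hP, hPm, hd⟩) y)
  intro l hl hd y hy
  rw [hF, hm] at hd
  norm_num at hd
  have h7 : l = 7 := (Nat.prime_dvd_prime_iff_eq hl (by norm_num)).mp hd
  subst h7
  have hy0 : y ≠ 0 := by
    rintro rfl
    exact hx0 (by rw [← hy]; simp)
  have := FiniteField.pow_card_sub_one_eq_one y hy0
  rw [hcE] at this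
  apply hxB
  rw [Finset.mem_singleton, ← hy]
  exact this

theorem good_2_15 [CharP F 2] (hF : Fintype.card F = 2) (hm : Module.finrank F E = 15) :
    Good F E := by
  classical
  have : Fact (Nat.Prime 2) := ⟨Nat.prime_two⟩
  have hcE : Fintype.card E = 32768 := by
    rw [Module.card_eq_pow_finrank (K := F) (V := E), hF, hm]; norm_num
  have hcop : Nat.gcd (Module.finrank F E) (Fintype.card F - 1) = 1 := by rw [hF, hm]; rfl
  obtain ⟨f1, f2, f3⟩ := facs_ok (F := F) (E := E) (by omega)
  have hf := facs_card_le_OmD (F := F) 2 4 15 6 (by norm_num) (by rw [hF]; norm_num) (by norm_num)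
  rw [hF, show OmD 2 (stripP 2 6 15) 4 = 5 by decide +kernel] at hf
  obtain ⟨x, hx0, hxB, hxS, hx⟩ := sieve2 (F := F) (E := E) {7, 31} (by
      rw [hcE]
      intro l hl
      simp only [Finset.mem_insert, Finset.mem_singleton] at hl
      rcases hl with rfl | rfl <;> norm_num)
    (facs F (Module.finrank F E)) f1 f2 f3 (Finset.univ.filter fun x : E => x ^ 217 = 1) (by
      have hB := card_pow_eq_one_le (E := E) 217 (by norm_num)
      have hB' : ((Finset.univ.filter fun x : E => x ^ 217 = 1).card : ℝ) ≤ 217 := by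
        exact_mod_cast hB
      refine lt_of_le_of_lt hB' ?_
      rw [hm, hcE]
      have hs : √((32768 : ℕ) : ℝ) ≤ 182 := by
        rw [Real.sqrt_le_left (by norm_num)]; norm_num
      rw [Finset.prod_pair (by norm_num), Finset.card_pair (by norm_num)]
      generalize (facs F 15).card = t at hf
      have h0 := Real.sqrt_nonneg ((32768 : ℕ) : ℝ)
      interval_cases t <;> norm_num at hs ⊢ <;> linarith)
  refine good_of hcop x hx0 ?_
    (fun P hP hPm hd y => hx P ((mem_facs _ (by omega) P).mpr ⟨hP, hPm, hd⟩) y)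
  intro l hl hd y hy
  rw [hF, hm] at hd
  norm_num at hd
  rw [show 32767 = 7 * 31 * 151 by norm_num, hl.dvd_mul, hl.dvd_mul] at hd
  rcases hd with (hd | hd) | hd
  · have h7 : l = 7 := (Nat.prime_dvd_prime_iff_eq hl (by norm_num)).mp hd
    exact hxS l (by simp [h7]) y hy
  · have h7 : l = 31 := (Nat.prime_dvd_prime_iff_eq hl (by norm_num)).mp hd
    exact hxS l (by simp [h7]) y hy
  · have h7 : l = 151 := (Nat.prime_dvd_prime_iff_eq hl (by norm_num)).mp hd
    subst h7
    have hy0 : y ≠ 0 := by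
      rintro rfl
      exact hx0 (by rw [← hy]; simp)
    have := FiniteField.pow_card_sub_one_eq_one y hy0
    rw [hcE] at this
    apply hxB
    rw [Finset.mem_filter]
    refine ⟨Finset.mem_univ _, ?_⟩
    rw [← hy, ← pow_mul]
    exact this

open Classical in
lemma card_8_le : (Finset.univ.filter fun x : E => x ^ 8 + x = 1).card ≤ 8 := by
  have hdeg : (X ^ 8 + X - 1 : E[X]).natDegree = 8 := by compute_degree!
  have hne : (X ^ 8 + X - 1 : E[X]) ≠ 0 := by
    intro h; rw [h] at hdeg; simp at hdeg
  refine le_trans ?_ ((card_roots' _).trans hdeg.le)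
  refine le_trans (Finset.card_le_card ?_) (Multiset.toFinset_card_le _)
  intro x hx
  rw [Finset.mem_filter] at hx
  rw [Multiset.mem_toFinset, mem_roots hne]
  simp [hx.2]

theorem good_2_6 [CharP F 2] (hF : Fintype.card F = 2) (hm : Module.finrank F E = 6) :
    Good F E := by
  classical
  have : Fact (Nat.Prime 2) := ⟨Nat.prime_two⟩
  have hch : CharP E 2 := charP_of_injective_algebraMap (algebraMap F E).injective 2
  have hcE : Fintype.card E = 64 := by
    rw [Module.card_eq_pow_finrank (K := F) (V := E), hF, hm]; norm_num
  have hcop : Nat.gcd (Module.finrank F E) (Fintype.card F - 1) = 1 := by rw [hF, hm]; rfl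
  have hX1 := X_sub_one_mem_facs (F := F) 6 (by norm_num)
  obtain ⟨f1, f2, f3⟩ := facs_ok (F := F) (E := E) (by omega)
  rw [hm] at f2 f3
  obtain ⟨x, hx0, hxB, hxS, hx⟩ := sieve2 (F := F) (E := E) {3} (by
      rw [hcE]
      intro l hl
      simp only [Finset.mem_singleton] at hl
      subst hl; norm_num)
    {X - 1} (by simp) (by intro P hP; rw [Finset.mem_singleton] at hP; exact hP ▸ f2 _ hX1)
    (by intro P hP; rw [Finset.mem_singleton] at hP; exact hP ▸ f3 _ hX1)
    ((Finset.univ.filter fun x : E => x ^ 9 = 1) ∪ (Finset.univ.filter fun x : E => x ^ 8 + x = 1))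
    (by
      have hB : ((Finset.univ.filter fun x : E => x ^ 9 = 1) ∪
          (Finset.univ.filter fun x : E => x ^ 8 + x = 1)).card ≤ 17 :=
        (Finset.card_union_le _ _).trans
          (Nat.add_le_add (card_pow_eq_one_le (E := E) 9 (by norm_num)) card_8_le)
      refine lt_of_le_of_lt (b := (17 : ℝ)) (by exact_mod_cast hB) ?_
      rw [hcE]
      have hs : √((64 : ℕ) : ℝ) = 8 := by
        rw [show ((64 : ℕ) : ℝ) = 8 ^ 2 by norm_num]
        exact Real.sqrt_sq (by norm_num)
      rw [hs]
      simp
      norm_num)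
  rw [Finset.mem_union, Finset.mem_filter, Finset.mem_filter, not_or] at hxB
  have hx9 : x ^ 9 ≠ 1 := fun h => hxB.1 ⟨Finset.mem_univ _, h⟩
  have hx8 : x ^ 8 + x ≠ 1 := fun h => hxB.2 ⟨Finset.mem_univ _, h⟩
  have hxX := hx (X - 1) (by simp)
  have h2 : (2 : E) = 0 := CharTwo.two_eq_zero
  have h2F : (2 : F[X]) = 0 := by
    exact CharTwo.two_eq_zero
  refine good_of hcop x hx0 ?_ ?_
  · intro l hl hd y hy
    rw [hF, hm] at hd
    norm_num at hd
    rw [show 63 = 3 ^ 2 * 7 by norm_num, hl.dvd_mul] at hd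
    rcases hd with hd | hd
    · have h7 : l = 3 := (Nat.prime_dvd_prime_iff_eq hl (by norm_num)).mp (hl.dvd_of_dvd_pow hd)
      exact hxS l (by simp [h7]) y hy
    · have h7 : l = 7 := (Nat.prime_dvd_prime_iff_eq hl (by norm_num)).mp hd
      subst h7
      have hy0 : y ≠ 0 := by
        rintro rfl
        exact hx0 (by rw [← hy]; simp)
      have := FiniteField.pow_card_sub_one_eq_one y hy0
      rw [hcE] at this
      apply hx9
      rw [← hy, ← pow_mul]
      exact this
  · intro P hP hPm hd z hz
    rw [hm] at hd
    have hPf : P ∈ facs F 6 := (mem_facs 6 (by norm_num) P).mpr ⟨hP, hPm, hd⟩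
    have e : (X ^ 6 - 1 : F[X]) = (X - 1) ^ 2 * (X ^ 2 + X + 1) ^ 2 := by
      linear_combination (X ^ 3 - 1) * h2F
    rw [e] at hd
    have hX1' := f2 _ hX1
    rcases hP.prime.dvd_or_dvd hd with hd | hd
    · have := hP.prime.dvd_of_dvd_pow hd
      have := eq_of_monic_of_associated hPm hX1'.2 (hP.associated_of_dvd hX1'.1 this)
      rw [this] at hz
      exact hxX z hz
    · have hd := hP.prime.dvd_of_dvd_pow hd
      have hmon : (X ^ 2 + X + 1 : F[X]).Monic := by monicity!
      have hdeg : (X ^ 2 + X + 1 : F[X]).natDegree = 2 := by compute_degree!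
      have hle := natDegree_le_of_dvd hd hmon.ne_zero
      rw [hdeg] at hle
      have hpos := hP.natDegree_pos
      rcases (show P.natDegree = 1 ∨ P.natDegree = 2 by omega) with h1 | h1
      · have := eq_of_natDegree_one 6 (by norm_num) (by rw [hF]; norm_num) P hPf h1
        rw [this] at hz
        exact hxX z hz
      · have hPe : X ^ 2 + X + 1 = P :=
          eq_of_monic_of_dvd_of_natDegree_le hPm hmon hd (by rw [hdeg, h1])
        rw [← hPe] at hz
        have hz' : z ^ 4 + z ^ 2 + z = x := by
          simp only [map_add, map_pow, aeval_X, map_one, LinearMap.add_apply,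
            frobLin_pow_apply, Module.End.one_apply, frobLin_apply, hF] at hz
          exact hz
        have hz64 : z ^ 64 = z := by
          have := FiniteField.pow_card z
          rwa [hcE] at this
        have hfr : ∀ a b : E, (a + b) ^ 2 = a ^ 2 + b ^ 2 := fun a b => add_pow_char a b 2
        have hx8' : x ^ 8 = z ^ 32 + z ^ 16 + z ^ 8 := by
          rw [← hz', show ∀ a : E, a ^ 8 = ((a ^ 2) ^ 2) ^ 2 by intro a; ring]
          simp only [hfr]; ring
        have htt : (x ^ 8 + x) ^ 2 = x ^ 8 + x := by
          rw [hx8', ← hz']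
          simp only [hfr]
          linear_combination hz64
        have h0 : x ^ 8 + x = 0 := by
          have : (x ^ 8 + x) * ((x ^ 8 + x) - 1) = 0 := by linear_combination htt
          rcases mul_eq_zero.mp this with h | h
          · exact h
          · exact absurd (sub_eq_zero.mp h) hx8
        have h8 : x ^ 8 = x := by linear_combination h0 - x * h2
        obtain ⟨y, hy⟩ := mem_range_of_ann (F := F) (E := E) (X - 1)
          (X ^ 5 + X ^ 4 + X ^ 3 + X ^ 2 + X + 1) (by rw [hm]; ring) x (by
            simp only [map_add, map_pow, aeval_X, map_one, LinearMap.add_apply,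
              frobLin_pow_apply, Module.End.one_apply, frobLin_apply, hF]
            have h16 : x ^ 16 = x ^ 2 := by
              rw [show x ^ 16 = (x ^ 8) ^ 2 by ring, h8]
            have h32 : x ^ 32 = x ^ 4 := by
              rw [show x ^ 32 = (x ^ 8) ^ 4 by ring, h8]
            norm_num
            rw [h8, h16, h32]
            linear_combination (x + x ^ 2 + x ^ 4) * h2)
        exact hxX y hy

lemma not_ppow (n a b : ℕ) (ha : a.Prime) (hb : b.Prime) (hab : a ≠ b) (h1 : a ∣ n)
    (h2 : b ∣ n) : ¬ IsPrimePow n := by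
  intro h
  rw [isPrimePow_iff_unique_prime_dvd] at h
  exact hab (h.unique ⟨ha, h1⟩ ⟨hb, h2⟩)

theorem good_main (hcop : Nat.gcd (Module.finrank F E) (Fintype.card F - 1) = 1) : Good F E := by
  have hq : 2 ≤ Fintype.card F := Fintype.one_lt_card
  have hm0 := (Module.finrank_pos (R := F) (M := E))
  have hpp : IsPrimePow (Fintype.card F) := FiniteField.isPrimePow_card F
  obtain ⟨q, hqF⟩ : ∃ q, Fintype.card F = q := ⟨_, rfl⟩
  obtain ⟨m, hmF⟩ : ∃ m, Module.finrank F E = m := ⟨_, rfl⟩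
  have : Fact (Nat.Prime 2) := ⟨Nat.prime_two⟩
  have : Fact (Nat.Prime 3) := ⟨Nat.prime_three⟩
  have : Fact (Nat.Prime 5) := ⟨by norm_num⟩
  have : Fact (Nat.Prime 7) := ⟨by norm_num⟩
  have : Fact (Nat.Prime 11) := ⟨by norm_num⟩
  have hcop' := hcop
  rw [hqF] at hpp hq
  rw [hmF] at hm0
  rw [hmF, hqF] at hcop'
  rcases Nat.lt_or_ge q 13 with hlt | hge
  · interval_cases q
    · -- q = 2
      have : CharP F 2 := charP_of_card_eq_prime_pow (f := 1) (by rw [hqF]; norm_num)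
      rcases Nat.lt_or_ge 80 m with h | h
      · have hf := facs_card_le' (F := F) m 5 (by omega) (by norm_num) (by rw [hqF]; exact hcop')
        rw [hqF, show Finset.Icc 2 5 = {2, 3, 4, 5} by decide] at hf
        have g2 := Nat.gcd_le_right m (show 0 < 2 ^ 2 - 1 by norm_num)
        have g3 := Nat.gcd_le_right m (show 0 < 2 ^ 3 - 1 by norm_num)
        have g4 := Nat.gcd_le_right m (show 0 < 2 ^ 4 - 1 by norm_num)
        have g5 := Nat.gcd_le_right m (show 0 < 2 ^ 5 - 1 by norm_num)
        norm_num at hf g2 g3 g4 g5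
        refine good_Dgen hcop 80 6 27 (by norm_num) (by omega) (by rw [hqF]; norm_num) ?_ (by rw [hqF]; norm_num)
        rw [hmF]; omega
      · rcases chk_all2 m (Finset.mem_Icc.mpr ⟨hm0, h⟩) with rfl | rfl | rfl | hc
        · exact good_2_3 hqF hmF
        · exact good_2_6 hqF hmF
        · exact good_2_15 hqF hmF
        · exact good_of_chk 2 2 m hqF hmF hcop' hc
    · -- q = 3
      have : CharP F 3 := charP_of_card_eq_prime_pow (f := 1) (by rw [hqF]; norm_num)
      rcases Nat.lt_or_ge 32 m with h | h
      · have hf := facs_card_le' (F := F) m 3 (by omega) (by norm_num) (by rw [hqF]; exact hcop')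
        rw [hqF, show Finset.Icc 2 3 = {2, 3} by decide] at hf
        have g2 := Nat.gcd_le_right m (show 0 < 3 ^ 2 - 1 by norm_num)
        have g3 : Nat.gcd m 26 ≤ 13 := by
          rw [show 26 = 2 * 13 by norm_num, Nat.Coprime.gcd_mul_left_cancel_right 13 (show Nat.Coprime m 2 from hcop').symm]
          exact Nat.gcd_le_right m (by norm_num)
        norm_num at hf g2 g3
        refine good_Dgen hcop 32 4 13 (by norm_num) (by omega) (by rw [hqF]; norm_num) ?_ (by rw [hqF]; norm_num)
        rw [hmF]; omega
      · exact good_of_chk 3 3 m hqF hmF hcop' (chk_all3 m (Finset.mem_Icc.mpr ⟨hm0, h⟩) hcop')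
    · -- q = 4
      have : CharP F 2 := charP_of_card_eq_prime_pow (f := 2) (by rw [hqF]; norm_num)
      rcases Nat.lt_or_ge 17 m with h | h
      · have hf := facs_card_le' (F := F) m 2 (by omega) (by norm_num) (by rw [hqF]; exact hcop')
        rw [hqF, show Finset.Icc 2 2 = {2} by decide] at hf
        have g2 : Nat.gcd m 15 ≤ 5 := by
          rw [show 15 = 3 * 5 by norm_num, Nat.Coprime.gcd_mul_left_cancel_right 5 (show Nat.Coprime m 3 from hcop').symm]
          exact Nat.gcd_le_right m (by norm_num)
        norm_num at hf g2
        refine good_Dgen hcop 18 3 4 (by norm_num) (by omega) (by rw [hqF]; norm_num) ?_ (by rw [hqF]; norm_num)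
        rw [hmF]; omega
      · exact good_of_chk 2 4 m hqF hmF hcop' (chk_all4 m (Finset.mem_Icc.mpr ⟨hm0, h⟩) hcop')
    · -- q = 5
      have : CharP F 5 := charP_of_card_eq_prime_pow (f := 1) (by rw [hqF]; norm_num)
      rcases Nat.lt_or_ge 20 m with h | h
      · exact good_D1 hcop 21 (by omega) (by omega) (by rw [hqF]; norm_num)
      · exact good_of_chk 5 5 m hqF hmF hcop' (chk_all5 m (Finset.mem_Icc.mpr ⟨hm0, h⟩) hcop')
    · exact absurd hpp (not_ppow _ 2 3 (by norm_num) (by norm_num) (by norm_num) (by norm_num) (by norm_num))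
    · -- q = 7
      have : CharP F 7 := charP_of_card_eq_prime_pow (f := 1) (by rw [hqF]; norm_num)
      rcases Nat.lt_or_ge 7 m with h | h
      · exact good_D1 hcop 8 (by omega) (by omega) (by rw [hqF]; norm_num)
      · exact good_of_chk 7 7 m hqF hmF hcop' (chk_all7 m (Finset.mem_Icc.mpr ⟨hm0, h⟩) hcop')
    · -- q = 8
      have : CharP F 2 := charP_of_card_eq_prime_pow (f := 3) (by rw [hqF]; norm_num)
      rcases Nat.lt_or_ge 6 m with h | h
      · exact good_D1 hcop 7 (by omega) (by omega) (by rw [hqF]; norm_num)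
      · exact good_of_chk 2 8 m hqF hmF hcop' (chk_all8 m (Finset.mem_Icc.mpr ⟨hm0, h⟩) hcop')
    · -- q = 9
      have : CharP F 3 := charP_of_card_eq_prime_pow (f := 2) (by rw [hqF]; norm_num)
      rcases Nat.lt_or_ge 5 m with h | h
      · exact good_D1 hcop 6 (by omega) (by omega) (by rw [hqF]; norm_num)
      · exact good_of_chk 3 9 m hqF hmF hcop' (chk_all9 m (Finset.mem_Icc.mpr ⟨hm0, h⟩) hcop')
    · exact absurd hpp (not_ppow _ 2 5 (by norm_num) (by norm_num) (by norm_num) (by norm_num) (by norm_num))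
    · -- q = 11
      have : CharP F 11 := charP_of_card_eq_prime_pow (f := 1) (by rw [hqF]; norm_num)
      rcases Nat.lt_or_ge 4 m with h | h
      · exact good_D1 hcop 5 (by omega) (by omega) (by rw [hqF]; norm_num)
      · exact good_of_chk 11 11 m hqF hmF hcop' (chk_all11 m (Finset.mem_Icc.mpr ⟨hm0, h⟩) hcop')
    · exact absurd hpp (not_ppow _ 2 3 (by norm_num) (by norm_num) (by norm_num) (by norm_num) (by norm_num))
  · rcases (show m = 1 ∨ m = 2 ∨ 3 ≤ m by omega) with rfl | rfl | h3
    · exact good_of_one hmF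
    · -- `m = 2`, so `q` is even
      obtain ⟨p, hch, n, hp, hpn⟩ := FiniteField.card' F
      have hpe : p = 2 := by
        by_contra hne
        have hodd : Odd (Fintype.card F) := by
          rw [hpn]; exact (hp.odd_of_ne_two hne).pow
        rw [hqF] at hodd
        obtain ⟨a, ha⟩ := hodd
        have : 2 ∣ Nat.gcd 2 (q - 1) := Nat.dvd_gcd dvd_rfl ⟨a, by omega⟩
        rw [hcop'] at this
        omega
      subst hpe
      have hf := facs_card_le_OmD (F := F) 2 1 2 1 (by norm_num) (by rw [hqF]; exact hcop') le_rfl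
      have e : OmD (Fintype.card F) (stripP 2 1 2) 1 = 1 := by
        simp [OmD, stripP]
      rw [e] at hf
      refine good_of_16 hcop ?_
      rw [hmF, hqF]
      have h1 : 16 ^ (facs F 2).card ≤ 16 ^ 1 := Nat.pow_le_pow_right (by norm_num) hf
      have h2 : 12 * 13 ^ 2 ≤ (q - 1) * q ^ 2 := Nat.mul_le_mul (by omega) (Nat.pow_le_pow_left hge 2)
      omega
    · refine good_D1 hcop 3 (by omega) (by omega) ?_
      rw [hqF]
      have h2 : 12 * 13 ^ 3 ≤ (q - 1) * q ^ 3 := Nat.mul_le_mul (by omega) (Nat.pow_le_pow_left hge 3)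
      rw [mul_assoc 15015]
      omega
end part7

/-- Let `E/F` be a degree-`m` extension of finite fields with `card F = q`.
If `gcd(m, q − 1) = 1`, then `E` contains an element `α` that is normal over `F`
(its conjugates `α, α^q, …, α^{q^{m−1}}` form an `F`-basis of `E`) and whose
multiplicative order equals `(q^m − 1)/(q − 1)`. -/
theorem exists_normal_of_order_qm_sub_one_div_q_sub_one
    {F E : Type} [Field F] [Fintype F] [Field E] [Fintype E] [Algebra F E]
    (q m : ℕ) (hF : Fintype.card F = q) (hm : Module.finrank F E = m)
    (hcop : Nat.gcd m (q - 1) = 1) :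
    ∃ α : E,
      LinearIndependent F (fun i : Fin m => α ^ q ^ (i : ℕ)) ∧
      Submodule.span F (Set.range fun i : Fin m => α ^ q ^ (i : ℕ)) = ⊤ ∧
      orderOf α = (q ^ m - 1) / (q - 1) := by
  subst hF hm
  exact good_main hcop
end
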